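/- arXiv:math/0204069 — 9 statements merged into one kernel-verified Lean document; each statement's English description precedes it below -/
import Mathlib

section
/- Let g ≥ 1 and let Γ_g be the surface group of genus g. Let ξ: Γ_g → ℂ* be a non-trivial character. Then the first group cohomology H¹(Γ_g, ℂ_ξ) is a complex vector space of dimension 2g − 2. -/
/-!
A 1-cocycle for `ℂ_ξ` is a function `f` with `f (x y) = ξ x f y + f x`. Since commutators have
trivial character, a direct computation gives
`f (∏ [aᵢ, bᵢ]) = ∑ ((1 - ξ bᵢ) f aᵢ + (ξ aᵢ - 1) f bᵢ)` (`crossed_prod_commutator`).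

On a free group a cocycle is freely prescribed by its values `v` on the generators: it is the
translation part of the action by affine maps `z ↦ ξ x z + v x`. This action descends to the
surface group exactly when its value on the relator, namely the linear form above evaluated at `v`,
vanishes. Hence `Z¹` is isomorphic to the kernel of a linear form on `ℂ^(2g)` (`range_evalGen`),
which is nonzero because `ξ` is non-trivial, so `dim Z¹ = 2g - 1`. The coboundary map `ℂ → Z¹` is
injective, again because `ξ` is non-trivial, so `dim B¹ = 1` and `dim H¹ = 2g - 2`.
-/

/-- The surface relator `∏ i, [aᵢ, bᵢ]` in the free group on the `2g` generators
`a₁, …, a_g, b₁, …, b_g`. -/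
def surfaceRelator (g : ℕ) : FreeGroup (Fin g ⊕ Fin g) :=
  (List.ofFn fun i : Fin g =>
    FreeGroup.of (Sum.inl i) * FreeGroup.of (Sum.inr i) *
      (FreeGroup.of (Sum.inl i))⁻¹ * (FreeGroup.of (Sum.inr i))⁻¹).prod

/-- The fundamental group of a closed orientable surface of genus `g`:
`⟨a₁, …, a_g, b₁, …, b_g | ∏ᵢ [aᵢ, bᵢ]⟩`. -/
abbrev SurfaceGroup (g : ℕ) : Type :=
  PresentedGroup ({surfaceRelator g} : Set (FreeGroup (Fin g ⊕ Fin g)))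

/-- The one-dimensional `G`-module `ℂ_ξ` given by a character `ξ : G → ℂ*`:
`g ∈ G` acts on `ℂ` by multiplication by `ξ g`. -/
noncomputable def charRep {G : Type*} [Group G] (ξ : G →* ℂˣ) : Representation ℂ G ℂ where
  toFun g := (ξ g : ℂ) • LinearMap.id
  map_one' := by simp; rfl
  map_mul' g h := by ext; simp [mul_smul, mul_comm]

open groupCohomology

section CrossedHom

variable {H : Type*} [Group H] (χ : H →* ℂˣ) (f : H → ℂ)

lemma crossed_one (hf : ∀ x y, f (x * y) = χ x * f y + f x) : f 1 = 0 := by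
  have h := hf 1 1
  simpa using h

lemma crossed_inv (hf : ∀ x y, f (x * y) = χ x * f y + f x) (x : H) :
    f x⁻¹ = -((χ x : ℂ)⁻¹ * f x) := by
  have h := hf x⁻¹ x
  rw [inv_mul_cancel, crossed_one χ f hf] at h
  simp only [map_inv, Units.val_inv_eq_inv_val] at h
  linear_combination -h

lemma crossed_commutator (hf : ∀ x y, f (x * y) = χ x * f y + f x) (a b : H) :
    f (a * b * a⁻¹ * b⁻¹) = (1 - χ b) * f a + (χ a - 1) * f b := by
  have ha : (χ a : ℂ) ≠ 0 := (χ a).ne_zero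
  have hb : (χ b : ℂ) ≠ 0 := (χ b).ne_zero
  simp only [hf, crossed_inv χ f hf, map_mul, map_inv, Units.val_mul, Units.val_inv_eq_inv_val]
  field_simp
  ring

/-- Fox calculus of the surface relator: commutators have trivial character, so a crossed
homomorphism is additive on their product. -/
lemma crossed_prod_commutator (hf : ∀ x y, f (x * y) = χ x * f y + f x) {n : ℕ}
    (a b : Fin n → H) :
    f (List.ofFn fun i => a i * b i * (a i)⁻¹ * (b i)⁻¹).prod =
      ∑ i, ((1 - χ (b i)) * f (a i) + (χ (a i) - 1) * f (b i)) := by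
  induction n with
  | zero => simpa using crossed_one χ f hf
  | succ n ih =>
    have h1 : χ (a 0 * b 0 * (a 0)⁻¹ * (b 0)⁻¹) = 1 := by
      simp only [map_mul, map_inv]
      rw [mul_right_comm (χ (a 0))]
      simp
    rw [List.ofFn_succ, List.prod_cons, hf, h1, crossed_commutator χ f hf, Fin.sum_univ_succ,
      ih (fun i => a i.succ) (fun i => b i.succ)]
    simp [add_comm]

end CrossedHom

/-- The affine permutation `z ↦ u z + v` of `ℂ`. -/
noncomputable def affinePerm (u : ℂˣ) (v : ℂ) : Equiv.Perm ℂ where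
  toFun z := u * z + v
  invFun z := (u : ℂ)⁻¹ * (z - v)
  left_inv z := by simp
  right_inv z := by simp

/-- The action of a free group on `ℂ` in which the generator `s` acts by `z ↦ χ s z + v s`. -/
noncomputable def freeAffine {S : Type*} (χ : FreeGroup S →* ℂˣ) (v : S → ℂ) :
    FreeGroup S →* Equiv.Perm ℂ :=
  FreeGroup.lift fun s => affinePerm (χ (FreeGroup.of s)) (v s)

lemma freeAffine_apply {S : Type*} (χ : FreeGroup S →* ℂˣ) (v : S → ℂ) (w : FreeGroup S) :
    ∀ z, freeAffine χ v w z = χ w * z + freeAffine χ v w 0 := by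
  induction w using FreeGroup.induction_on with
  | C1 => simp
  | of s => intro z; simp [freeAffine, affinePerm]
  | inv_of s _ =>
    intro z
    simp only [freeAffine, map_inv, FreeGroup.lift_apply_of, Equiv.Perm.inv_def, affinePerm,
      Equiv.coe_fn_symm_mk, Units.val_inv_eq_inv_val]
    ring
  | mul x y hx hy =>
    intro z
    rw [map_mul, Equiv.Perm.mul_apply, Equiv.Perm.mul_apply, hx, hx (freeAffine χ v y 0), hy z,
      map_mul, Units.val_mul]
    ring

section Surface

variable {g : ℕ} (ξ : SurfaceGroup g →* ℂˣ)

/-- The class of a standard generator in the surface group. -/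
def surfaceGen (g : ℕ) (s : Fin g ⊕ Fin g) : SurfaceGroup g := PresentedGroup.of s

lemma mem_cocycles_iff (f : SurfaceGroup g → ℂ) :
    f ∈ cocycles₁ (Rep.of (charRep ξ)) ↔ ∀ x y, f (x * y) = ξ x * f y + f x :=
  mem_cocycles₁_iff (A := Rep.of (charRep ξ)) f

/-- The linear form on values at the generators that computes the value of a cocycle on the
surface relator. -/
noncomputable def relForm : (Fin g ⊕ Fin g → ℂ) →ₗ[ℂ] ℂ :=
  ∑ i : Fin g, ((1 - (ξ (surfaceGen g (Sum.inr i)) : ℂ)) • LinearMap.proj (Sum.inl i) +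
    ((ξ (surfaceGen g (Sum.inl i)) : ℂ) - 1) • LinearMap.proj (Sum.inr i))

lemma relForm_apply (v : Fin g ⊕ Fin g → ℂ) :
    relForm ξ v = ∑ i : Fin g, ((1 - ξ (surfaceGen g (Sum.inr i))) * v (Sum.inl i) +
      (ξ (surfaceGen g (Sum.inl i)) - 1) * v (Sum.inr i)) := by
  simp [relForm]

lemma relForm_ne_zero (hξ : ξ ≠ 1) : relForm ξ ≠ 0 := by
  intro h
  apply hξ
  refine PresentedGroup.ext fun s => ?_
  have h1 := relForm_apply ξ
  rw [h] at h1
  rcases s with i | i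
  · have := h1 (Pi.single (Sum.inr i) 1)
    simp [Pi.single_apply] at this
    ext
    simpa [surfaceGen, sub_eq_zero] using this.symm
  · have := h1 (Pi.single (Sum.inl i) 1)
    simp [Pi.single_apply] at this
    ext
    exact (sub_eq_zero.1 this.symm).symm

/-- Evaluation of a cocycle on the standard generators. -/
noncomputable def evalGen :
    cocycles₁ (Rep.of (charRep ξ)) →ₗ[ℂ] (Fin g ⊕ Fin g → ℂ) where
  toFun f s := f.1 (surfaceGen g s)
  map_add' _ _ := rfl
  map_smul' _ _ := rfl

lemma evalGen_injective : Function.Injective (evalGen ξ) := by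
  rw [injective_iff_map_eq_zero]
  rintro ⟨f, hf⟩ h
  rw [mem_cocycles_iff] at hf
  have h0 : ∀ s, f (surfaceGen g s) = 0 := fun s => congrFun h s
  apply Subtype.ext
  funext x
  change f x = 0
  induction x using PresentedGroup.induction_on with
  | _ w =>
    induction w using FreeGroup.induction_on with
    | C1 => simpa using crossed_one ξ f hf
    | of s => exact h0 s
    | inv_of s hs => rw [map_inv, crossed_inv ξ f hf, hs]; simp
    | mul x y hx hy => rw [map_mul, hf, hx, hy]; simp

/-- Values on the generators extend to a cocycle iff they satisfy the relator equation. -/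
lemma range_evalGen : LinearMap.range (evalGen ξ) = LinearMap.ker (relForm ξ) := by
  have hrel : PresentedGroup.mk {surfaceRelator g} (surfaceRelator g) = 1 :=
    PresentedGroup.one_of_mem rfl
  apply le_antisymm
  · rintro _ ⟨⟨f, hf⟩, rfl⟩
    rw [mem_cocycles_iff] at hf
    rw [LinearMap.mem_ker, relForm_apply]
    have h := crossed_prod_commutator ξ f hf (fun i => surfaceGen g (Sum.inl i))
      (fun i => surfaceGen g (Sum.inr i))
    have h2 : (List.ofFn fun i => surfaceGen g (Sum.inl i) * surfaceGen g (Sum.inr i) *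
        (surfaceGen g (Sum.inl i))⁻¹ * (surfaceGen g (Sum.inr i))⁻¹).prod = 1 := by
      refine Eq.trans ?_ hrel
      conv_rhs => arg 2; unfold surfaceRelator
      rw [map_list_prod, List.map_ofFn]
      rfl
    rw [h2, crossed_one ξ f hf] at h
    exact h.symm
  · intro v hv
    rw [LinearMap.mem_ker, relForm_apply] at hv
    set χ : FreeGroup (Fin g ⊕ Fin g) →* ℂˣ := ξ.comp (PresentedGroup.mk _) with hχ
    have hcr : ∀ x y, freeAffine χ v (x * y) 0 = χ x * freeAffine χ v y 0 + freeAffine χ v x 0 := by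
      intro x y
      rw [map_mul, Equiv.Perm.mul_apply, freeAffine_apply]
    have hgen : ∀ s, freeAffine χ v (FreeGroup.of s) 0 = v s := by
      intro s; simp [freeAffine, affinePerm]
    have hr0 : freeAffine χ v (surfaceRelator g) 0 = 0 := by
      have h := crossed_prod_commutator χ (fun w => freeAffine χ v w 0) hcr
        (fun i => FreeGroup.of (Sum.inl i)) (fun i => FreeGroup.of (Sum.inr i))
      simp only [hgen] at h
      exact h.trans hv
    have hr : freeAffine χ v (surfaceRelator g) = 1 := by
      ext z
      rw [freeAffine_apply, hr0, hχ, MonoidHom.comp_apply, hrel]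
      simp
    -- the affine action descends to the surface group
    let ρ : SurfaceGroup g →* Equiv.Perm ℂ :=
      PresentedGroup.toGroup (f := fun s => affinePerm (χ (FreeGroup.of s)) (v s)) (by
        rintro _ rfl
        exact hr)
    have hρ : ∀ w, ρ (PresentedGroup.mk _ w) = freeAffine χ v w := fun w => rfl
    refine ⟨⟨fun x => ρ x 0, (mem_cocycles_iff ξ _).2 ?_⟩, ?_⟩
    · intro x y
      induction x using PresentedGroup.induction_on with
      | _ x =>
      induction y using PresentedGroup.induction_on with
      | _ y =>
      rw [← map_mul, hρ, hρ, hρ]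
      exact hcr x y
    · funext s
      exact hgen s

lemma finrank_ker_relForm (hξ : ξ ≠ 1) :
    Module.finrank ℂ (LinearMap.ker (relForm ξ)) + 1 = 2 * g := by
  have h := LinearMap.finrank_range_add_finrank_ker (relForm ξ)
  rw [LinearMap.range_eq_top.2 (LinearMap.surjective (relForm_ne_zero ξ hξ)), finrank_top] at h
  simp at h
  omega

/-- The coboundary map `ℂ → Z¹`. -/
noncomputable def coboundaryMap : ℂ →ₗ[ℂ] cocycles₁ (Rep.of (charRep ξ)) where
  toFun c := ⟨fun x => ξ x * c - c, (mem_cocycles_iff ξ _).2 fun x y => by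
    simp only [map_mul, Units.val_mul]; ring⟩
  map_add' a b := by
    apply Subtype.ext; funext x
    change (ξ x : ℂ) * (a + b) - (a + b) = (ξ x * a - a) + (ξ x * b - b)
    ring
  map_smul' a b := by
    apply Subtype.ext; funext x
    change (ξ x : ℂ) * (a * b) - (a * b) = a * (ξ x * b - b)
    ring

lemma coboundaryMap_injective (hξ : ξ ≠ 1) : Function.Injective (coboundaryMap ξ) := by
  rw [injective_iff_map_eq_zero]
  intro c hc
  by_contra hne
  apply hξ
  refine MonoidHom.ext fun x => Units.ext ?_
  have h : (ξ x : ℂ) * c - c = 0 := congrFun (congrArg Subtype.val hc) x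
  have h2 : ((ξ x : ℂ) - 1) * c = 0 := by linear_combination h
  simpa [hne, sub_eq_zero] using h2

lemma ker_H1π : LinearMap.ker (H1π (Rep.of (charRep ξ))).hom =
    LinearMap.range (coboundaryMap ξ) := by
  ext f
  rw [LinearMap.mem_ker]
  refine (H1π_eq_zero_iff (A := Rep.of (charRep ξ)) f).trans ?_
  constructor
  · rintro ⟨c, hc⟩
    exact ⟨c, Subtype.ext hc⟩
  · rintro ⟨c, rfl⟩
    exact ⟨c, rfl⟩

end Surface

/-- For `g ≥ 1` and a non-trivial character `ξ : Γ_g → ℂ*`, the first group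
cohomology `H¹(Γ_g, ℂ_ξ)` is a complex vector space of dimension `2g − 2`. -/
theorem stmt3 (g : ℕ) (hg : 1 ≤ g) (ξ : SurfaceGroup g →* ℂˣ) (hξ : ξ ≠ 1) :
    FiniteDimensional ℂ (groupCohomology (Rep.of (charRep ξ)) 1) ∧
      Module.finrank ℂ (groupCohomology (Rep.of (charRep ξ)) 1) = 2 * g - 2 := by
  have hsurj : Function.Surjective (H1π (Rep.of (charRep ξ))).hom :=
    (ModuleCat.epi_iff_surjective _).1 inferInstance
  have hfin : FiniteDimensional ℂ (cocycles₁ (Rep.of (charRep ξ))) :=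
    Module.Finite.of_injective (evalGen ξ) (evalGen_injective ξ)
  have hZ : Module.finrank ℂ (cocycles₁ (Rep.of (charRep ξ))) + 1 = 2 * g := by
    rw [← finrank_ker_relForm ξ hξ, ← range_evalGen,
      LinearMap.finrank_range_of_inj (evalGen_injective ξ)]
  have hB : Module.finrank ℂ (LinearMap.ker (H1π (Rep.of (charRep ξ))).hom) = 1 := by
    rw [ker_H1π, LinearMap.finrank_range_of_inj (coboundaryMap_injective ξ hξ),
      Module.finrank_self]
  refine ⟨Module.Finite.of_surjective _ hsurj, ?_⟩
  have h := LinearMap.finrank_range_add_finrank_ker (H1π (Rep.of (charRep ξ))).hom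
  rw [hB, LinearMap.range_eq_top.2 hsurj, finrank_top] at h
  change _ = Module.finrank ℂ (cocycles₁ (Rep.of (charRep ξ))) at h
  change Module.finrank ℂ (H1 (Rep.of (charRep ξ))) = _
  omega
end

section
/- Let g ≥ 1 and let Γ_g be the surface group of genus g. Let ξ: Γ_g → ℂ* be a non-trivial character. Then the complex vector space Z¹(Γ_g, ℂ_ξ) of all ξ-cocycles, i.e., maps b: Γ_g → ℂ with b(xy) = b(x) + ξ(x)·b(y) for all x, y ∈ Γ_g, has dimension 2g − 1. -/
/-- The complex vector space `Z¹(G, ℂ_ξ)` of `ξ`-cocycles: maps `b : G → ℂ` with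
`b (x y) = b x + ξ x · b y`, with pointwise operations. -/
noncomputable def cocycleSubmodule {G : Type*} [Group G] (ξ : G →* ℂˣ) : Submodule ℂ (G → ℂ) where
  carrier := {b | ∀ x y : G, b (x * y) = b x + (ξ x : ℂ) * b y}
  add_mem' := by
    intro a b ha hb x y
    simp only [Pi.add_apply, ha x y, hb x y]
    ring
  zero_mem' := by intro x y; simp
  smul_mem' := by
    intro c b hb x y
    simp only [Pi.smul_apply, smul_eq_mul, hb x y]
    ring

/-- The action of `ℂˣ` on the additive group `ℂ` by multiplication. -/
noncomputable def scalingAction : ℂˣ →* MulAut (Multiplicative ℂ) :=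
  (MulAutMultiplicative ℂ).symm.toMonoidHom.comp (DistribMulAction.toAddAut ℂˣ ℂ)

lemma scalingAction_apply (u : ℂˣ) (x : Multiplicative ℂ) :
    scalingAction u x = Multiplicative.ofAdd ((u : ℂ) * x.toAdd) := rfl

/-- The affine group `ℂ ⋊ ℂˣ` of the complex line. -/
abbrev AffineLine : Type := SemidirectProduct (Multiplicative ℂ) ℂˣ scalingAction

/-- The affine map `z ↦ u z + c`. -/
def affineElt (c : ℂ) (u : ℂˣ) : AffineLine := ⟨Multiplicative.ofAdd c, u⟩

lemma affineElt_mul (c d : ℂ) (u w : ℂˣ) :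
    affineElt c u * affineElt d w = affineElt (c + u * d) (u * w) := rfl

lemma affineElt_inv (c : ℂ) (u : ℂˣ) :
    (affineElt c u)⁻¹ = affineElt (-((u⁻¹ : ℂˣ) * c)) u⁻¹ := by
  apply inv_eq_of_mul_eq_one_right
  rw [affineElt_mul]
  simp [affineElt]

lemma affineElt_commutator (x y : ℂ) (α β : ℂˣ) :
    affineElt x α * affineElt y β * (affineElt x α)⁻¹ * (affineElt y β)⁻¹ =
      SemidirectProduct.inl (Multiplicative.ofAdd ((1 - (β : ℂ)) * x - (1 - (α : ℂ)) * y)) := by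
  simp only [affineElt_inv, affineElt_mul]
  have hα : (α : ℂ) ≠ 0 := α.ne_zero
  have hβ : (β : ℂ) ≠ 0 := β.ne_zero
  have h1 : α * β * α⁻¹ * β⁻¹ = 1 := by
    rw [mul_comm α β, mul_inv_cancel_right, mul_inv_cancel]
  rw [h1]
  refine SemidirectProduct.ext ?_ rfl
  simp only [affineElt, SemidirectProduct.left_inl]
  congr 1
  push_cast
  field_simp
  ring

section Surface

variable {g : ℕ} (ξ : SurfaceGroup g →* ℂˣ)

/-- The value of `ξ` on a generator of the surface group. -/
noncomputable def genValue (s : Fin g ⊕ Fin g) : ℂˣ := ξ (PresentedGroup.of s)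

/-- The homomorphism from the free group to the affine group that lifts `ξ` and has
translation part `v` on the generators. -/
noncomputable def freeLift (v : Fin g ⊕ Fin g → ℂ) :
    FreeGroup (Fin g ⊕ Fin g) →* AffineLine :=
  FreeGroup.lift fun s => affineElt (v s) (genValue ξ s)

/-- The linear functional expressing that `freeLift ξ v` kills the surface relator. -/
noncomputable def relatorFunctional : (Fin g ⊕ Fin g → ℂ) →ₗ[ℂ] ℂ :=
  ∑ i : Fin g, ((1 - (genValue ξ (Sum.inr i) : ℂ)) • LinearMap.proj (Sum.inl i) -
    (1 - (genValue ξ (Sum.inl i) : ℂ)) • LinearMap.proj (Sum.inr i))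

lemma relatorFunctional_apply (v : Fin g ⊕ Fin g → ℂ) :
    relatorFunctional ξ v = ∑ i : Fin g, ((1 - (genValue ξ (Sum.inr i) : ℂ)) * v (Sum.inl i) -
      (1 - (genValue ξ (Sum.inl i) : ℂ)) * v (Sum.inr i)) := by
  simp [relatorFunctional]

lemma freeLift_surfaceRelator (v : Fin g ⊕ Fin g → ℂ) :
    freeLift ξ v (surfaceRelator g) =
      SemidirectProduct.inl (Multiplicative.ofAdd (relatorFunctional ξ v)) := by
  rw [surfaceRelator, map_list_prod, List.map_ofFn, relatorFunctional_apply, ofAdd_sum,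
    ← List.prod_ofFn, map_list_prod, List.map_ofFn]
  congr 2
  funext i
  simp only [Function.comp_apply, map_mul, map_inv, freeLift, FreeGroup.lift_apply_of]
  exact affineElt_commutator _ _ _ _

lemma freeLift_surfaceRelator_eq_one_iff (v : Fin g ⊕ Fin g → ℂ) :
    freeLift ξ v (surfaceRelator g) = 1 ↔ relatorFunctional ξ v = 0 := by
  rw [freeLift_surfaceRelator, map_eq_one_iff _ SemidirectProduct.inl_injective, ofAdd_eq_one]

variable {ξ}

/-- The lift of `ξ` to the affine group defined by a `ξ`-cocycle. -/
noncomputable def cocycleHom (b : cocycleSubmodule ξ) : SurfaceGroup g →* AffineLine :=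
  MonoidHom.mk' (fun x => affineElt (b.1 x) (ξ x)) fun x y => by
    rw [affineElt_mul, b.2 x y, map_mul]

lemma cocycleHom_apply (b : cocycleSubmodule ξ) (x : SurfaceGroup g) :
    cocycleHom b x = affineElt (b.1 x) (ξ x) := rfl

variable (ξ)

/-- Restriction of cocycles to the generators. -/
noncomputable def restrictGens : cocycleSubmodule ξ →ₗ[ℂ] (Fin g ⊕ Fin g → ℂ) where
  toFun b s := b.1 (PresentedGroup.of s)
  map_add' _ _ := rfl
  map_smul' _ _ := rfl

lemma restrictGens_injective : Function.Injective (restrictGens ξ) := by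
  intro b c h
  have hbc : cocycleHom b = cocycleHom c := by
    refine PresentedGroup.ext fun s => ?_
    have hs : b.1 (PresentedGroup.of s) = c.1 (PresentedGroup.of s) := congrFun h s
    rw [cocycleHom_apply, cocycleHom_apply, hs]
  ext x
  exact congrArg (fun z : AffineLine => z.left.toAdd) (DFunLike.congr_fun hbc x)

lemma range_restrictGens :
    LinearMap.range (restrictGens ξ) = LinearMap.ker (relatorFunctional ξ) := by
  ext v
  rw [LinearMap.mem_ker, ← freeLift_surfaceRelator_eq_one_iff]
  constructor
  · rintro ⟨b, rfl⟩
    have h : freeLift ξ (restrictGens ξ b) =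
        (cocycleHom b).comp (PresentedGroup.mk {surfaceRelator g}) := by
      refine FreeGroup.ext_hom _ _ fun s => ?_
      rw [freeLift, FreeGroup.lift_apply_of]
      rfl
    have h1 : PresentedGroup.mk {surfaceRelator g} (surfaceRelator g) = 1 :=
      PresentedGroup.one_of_mem (Set.mem_singleton _)
    rw [h, MonoidHom.comp_apply, h1, map_one]
  · intro hv
    let H : SurfaceGroup g →* AffineLine :=
      PresentedGroup.toGroup (f := fun s => affineElt (v s) (genValue ξ s)) (by
        rintro r rfl
        exact hv)
    have hH (s : Fin g ⊕ Fin g) : H (PresentedGroup.of s) = affineElt (v s) (genValue ξ s) :=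
      PresentedGroup.toGroup.of _
    have hright : SemidirectProduct.rightHom.comp H = ξ := by
      refine PresentedGroup.ext fun s => ?_
      rw [MonoidHom.comp_apply, hH]
      rfl
    refine ⟨⟨fun x => (H x).left.toAdd, fun x y => ?_⟩, ?_⟩
    · beta_reduce
      rw [map_mul, SemidirectProduct.mul_left, scalingAction_apply, toAdd_mul, toAdd_ofAdd]
      rw [← DFunLike.congr_fun hright x]
      rfl
    · funext s
      change (H (PresentedGroup.of s)).left.toAdd = v s
      rw [hH]
      rfl

lemma relatorFunctional_ne_zero (hξ : ξ ≠ 1) : relatorFunctional ξ ≠ 0 := by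
  intro h0
  refine hξ (PresentedGroup.ext fun s => ?_)
  -- On a basis vector the functional returns `±(1 - ξ)` of the dual generator.
  rcases s with i | i
  · have h := LinearMap.congr_fun h0 (Pi.single (Sum.inr i) 1)
    simp [relatorFunctional_apply, Pi.single_apply] at h
    exact Units.ext (sub_eq_zero.1 h)
  · have h := LinearMap.congr_fun h0 (Pi.single (Sum.inl i) 1)
    simp [relatorFunctional_apply, Pi.single_apply] at h
    exact Units.ext (sub_eq_zero.1 h).symm

end Surface

/-- For `g ≥ 1` and a non-trivial character `ξ : Γ_g → ℂ*`, the space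
`Z¹(Γ_g, ℂ_ξ)` of `ξ`-cocycles has complex dimension `2g − 1`. -/
theorem stmt4 (g : ℕ) (hg : 1 ≤ g) (ξ : SurfaceGroup g →* ℂˣ) (hξ : ξ ≠ 1) :
    FiniteDimensional ℂ (cocycleSubmodule ξ) ∧
      Module.finrank ℂ (cocycleSubmodule ξ) = 2 * g - 1 := by
  have hinj := restrictGens_injective ξ
  refine ⟨FiniteDimensional.of_injective _ hinj, ?_⟩
  rw [← LinearMap.finrank_range_of_inj hinj, range_restrictGens]
  have hrank := (relatorFunctional ξ).finrank_range_add_finrank_ker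
  rw [LinearMap.range_eq_top.2 (LinearMap.surjective (relatorFunctional_ne_zero ξ hξ)),
    finrank_top, Module.finrank_self, Module.finrank_fintype_fun_eq_card, Fintype.card_sum,
    Fintype.card_fin] at hrank
  omega
end

section
/- Let g ≥ 1 and let Γ_g be the surface group of genus g. Let ξ: Γ_g → ℂ* be a non-trivial character. Then the second group cohomology H²(Γ_g, ℂ_ξ) vanishes. -/
section Abstract

variable {E : Type*} [Group E] (χ : E →* ℂˣ) (ι : ℂ → E)

/-- If `E` acts by conjugation on the subgroup `ι ℂ` through `χ`, then shifting `x` by `u` and `y`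
by `v` shifts the commutator `x y x⁻¹ y⁻¹` by `(1 - χ y) u + (χ x - 1) v`. -/
theorem commutator_shift (hadd : ∀ a b, ι (a + b) = ι a * ι b)
    (hconj : ∀ e a, e * ι a = ι (χ e * a) * e) (x y : E) (u v : ℂ) :
    (ι u * x) * (ι v * y) * (ι u * x)⁻¹ * (ι v * y)⁻¹ =
      ι ((1 - χ y) * u + (χ x - 1) * v) * (x * y * x⁻¹ * y⁻¹) := by
  have key : ∀ (x y : E) (u v : ℂ),
      (ι u * x) * (ι v * y) = ι (u + χ x * v) * (x * y) := by
    intro x y u v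
    rw [hadd, mul_assoc, ← mul_assoc x, hconj x v]
    simp only [mul_assoc]
  have hc : (x * y * x⁻¹ * y⁻¹) * ι (v + χ y * u) = ι (v + χ y * u) * (x * y * x⁻¹ * y⁻¹) := by
    have h1 : χ (x * y * x⁻¹ * y⁻¹) = 1 := by simp [mul_comm (χ x)]
    rw [hconj, h1]; simp
  have e1 : (ι u * x) * (ι v * y) * (ι u * x)⁻¹ * (ι v * y)⁻¹ =
      ((ι u * x) * (ι v * y)) * ((ι v * y) * (ι u * x))⁻¹ := by group
  have e2 : ι (u + χ x * v) =
      ι ((1 - χ y) * u + (χ x - 1) * v) * ι (v + χ y * u) := by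
    rw [← hadd]; congr 1; ring
  rw [e1, key, key, mul_inv_eq_iff_eq_mul, e2, mul_assoc, mul_assoc]
  congr 1
  rw [← mul_assoc _ (ι _) (y * x), hc]
  group

theorem prod_shift (hadd : ∀ a b, ι (a + b) = ι a * ι b)
    (hconj : ∀ e a, e * ι a = ι (χ e * a) * e) (n : ℕ) (c : Fin n → E) (d : Fin n → ℂ)
    (hc : ∀ i, χ (c i) = 1) :
    (List.ofFn fun i => ι (d i) * c i).prod = ι (∑ i, d i) * (List.ofFn c).prod := by
  induction n with
  | zero =>
    have h : ι 0 = 1 := by simpa using hadd 0 0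
    simp [h]
  | succ n ih =>
    rw [List.ofFn_succ, List.ofFn_succ, List.prod_cons, List.prod_cons,
      ih (fun i => c i.succ) (fun i => d i.succ) (fun i => hc _), Fin.sum_univ_succ, hadd,
      mul_assoc, ← mul_assoc (c 0), hconj, hc]
    simp [mul_assoc]

end Abstract

/-- Every extension of `Γ_g` by `ℂ_ξ` with `ξ ≠ 1` splits. The extension is given by `π : E → Γ_g`
and `ι : ℂ → E`, with the exactness properties that are needed. -/
theorem exists_section (g : ℕ) (ξ : SurfaceGroup g →* ℂˣ) (hξ : ξ ≠ 1)
    {E : Type*} [Group E] (π : E →* SurfaceGroup g) (hπ : Function.Surjective π) (ι : ℂ → E)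
    (hadd : ∀ a b, ι (a + b) = ι a * ι b) (hker : ∀ e, π e = 1 → ∃ a, e = ι a)
    (hι : ∀ a, π (ι a) = 1) (hconj : ∀ e a, e * ι a = ι (ξ (π e) * a) * e) :
    ∃ s : SurfaceGroup g →* E, π.comp s = MonoidHom.id _ := by
  have hzero : ι 0 = 1 := by simpa using hadd 0 0
  obtain ⟨l, hl⟩ : ∃ l : Fin g ⊕ Fin g → E, ∀ j, π (l j) = PresentedGroup.of j :=
    ⟨fun j => (hπ (.of j)).choose, fun j => (hπ (.of j)).choose_spec⟩
  -- The corrections `(1 - ξ(bᵢ)) uᵢ + (ξ(aᵢ) - 1) vᵢ` can be made to sum to any given number.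
  have hsolve : ∀ t : ℂ, ∃ w : Fin g ⊕ Fin g → ℂ,
      ∑ i, ((1 - (ξ (π (l (.inr i))) : ℂ)) * w (.inl i)
        + ((ξ (π (l (.inl i))) : ℂ) - 1) * w (.inr i)) = t := by
    intro t
    obtain ⟨j, hj⟩ : ∃ j, ξ (.of j) ≠ 1 := by
      by_contra! h
      exact hξ (PresentedGroup.ext fun x => by simpa using h x)
    have hj' : (ξ (π (l j)) : ℂ) - 1 ≠ 0 := by
      rw [hl, sub_ne_zero]; simpa using hj
    rcases j with i | i
    · refine ⟨Pi.single (.inr i) (((ξ (π (l (.inl i))) : ℂ) - 1)⁻¹ * t), ?_⟩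
      rw [Finset.sum_eq_single i]
      · simp [mul_inv_cancel_left₀ hj']
      · intro k _ hk
        simp [hk]
      · simp
    · refine ⟨Pi.single (.inl i) (-(((ξ (π (l (.inr i))) : ℂ) - 1)⁻¹ * t)), ?_⟩
      rw [Finset.sum_eq_single i]
      · have := mul_inv_cancel_left₀ hj' t
        simp only [Pi.single_eq_same, ne_eq, reduceCtorEq, not_false_eq_true,
          Pi.single_eq_of_ne, mul_zero, add_zero]
        linear_combination this
      · intro k _ hk
        simp [hk]
      · simp
  have hlift : ∀ m : Fin g ⊕ Fin g → E, FreeGroup.lift m (surfaceRelator g) =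
      (List.ofFn fun i : Fin g =>
        m (.inl i) * m (.inr i) * (m (.inl i))⁻¹ * (m (.inr i))⁻¹).prod := by
    intro m
    simp [surfaceRelator, map_list_prod, List.map_ofFn, Function.comp_def]
  obtain ⟨p, hp⟩ : ∃ p, FreeGroup.lift l (surfaceRelator g) = ι p := by
    apply hker
    have h : π.comp (FreeGroup.lift l) = PresentedGroup.mk {surfaceRelator g} := by
      ext j
      rw [MonoidHom.comp_apply, FreeGroup.lift_apply_of]
      exact hl j
    rw [← MonoidHom.comp_apply, h]
    exact (QuotientGroup.eq_one_iff _).2 (Subgroup.subset_normalClosure rfl)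
  obtain ⟨w, hw⟩ := hsolve (-p)
  have hrel : ∀ r ∈ ({surfaceRelator g} : Set (FreeGroup (Fin g ⊕ Fin g))),
      FreeGroup.lift (fun j => ι (w j) * l j) r = 1 := by
    rintro r rfl
    rw [hlift]
    have hcs := fun i : Fin g => commutator_shift (ξ.comp π) ι hadd hconj
      (l (.inl i)) (l (.inr i)) (w (.inl i)) (w (.inr i))
    simp only [hcs]
    rw [prod_shift (ξ.comp π) ι hadd hconj, ← hlift, hp, ← hadd]
    · simp only [MonoidHom.comp_apply]
      rw [hw, neg_add_cancel, hzero]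
    · intro i
      simp [mul_comm (ξ (π (l (.inl i))))]
  refine ⟨PresentedGroup.toGroup hrel, PresentedGroup.ext fun j => ?_⟩
  simp [PresentedGroup.toGroup.of, hι, hl]

/-- The extension of `G` by `ℂ_ξ` defined by a 2-cocycle `f`: the set `ℂ × G` with multiplication
`(a, g) (b, h) = (a + ξ(g) b + f(g, h), g h)`. The cocycle is not assumed normalised, so the
identity is `(-f(1, 1), 1)`. -/
@[ext]
structure CocycleExt {G : Type*} [Group G] (ξ : G →* ℂˣ) (f : G × G → ℂ)
    (hf : ∀ g h j, f (g * h, j) + f (g, h) = ξ g * f (h, j) + f (g, h * j)) where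
  /-- The component in the kernel `ℂ`. -/
  val : ℂ
  /-- The image in `G`. -/
  base : G

namespace CocycleExt

variable {G : Type*} [Group G] {ξ : G →* ℂˣ} {f : G × G → ℂ}
  {hf : ∀ g h j, f (g * h, j) + f (g, h) = ξ g * f (h, j) + f (g, h * j)}

instance : Mul (CocycleExt ξ f hf) :=
  ⟨fun x y => ⟨x.val + ξ x.base * y.val + f (x.base, y.base), x.base * y.base⟩⟩

instance : One (CocycleExt ξ f hf) := ⟨⟨-f (1, 1), 1⟩⟩

noncomputable instance : Inv (CocycleExt ξ f hf) :=
  ⟨fun x => ⟨-(ξ x.base⁻¹ * x.val) - f (x.base⁻¹, x.base) - f (1, 1), x.base⁻¹⟩⟩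

theorem mul_def (x y : CocycleExt ξ f hf) :
    x * y = ⟨x.val + ξ x.base * y.val + f (x.base, y.base), x.base * y.base⟩ := rfl

theorem one_def : (1 : CocycleExt ξ f hf) = ⟨-f (1, 1), 1⟩ := rfl

theorem inv_def (x : CocycleExt ξ f hf) :
    x⁻¹ = ⟨-(ξ x.base⁻¹ * x.val) - f (x.base⁻¹, x.base) - f (1, 1), x.base⁻¹⟩ := rfl

theorem f_one_left (hf : ∀ g h j, f (g * h, j) + f (g, h) = ξ g * f (h, j) + f (g, h * j))
    (g : G) : f (1, g) = f (1, 1) := by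
  have := hf 1 1 g
  simp at this
  exact this.symm

theorem f_one_right (hf : ∀ g h j, f (g * h, j) + f (g, h) = ξ g * f (h, j) + f (g, h * j))
    (g : G) : f (g, 1) = ξ g * f (1, 1) := by
  have := hf g 1 1
  simpa using this

noncomputable instance : Group (CocycleExt ξ f hf) :=
  Group.ofLeftAxioms
    (fun x y z => by
      ext
      · simp only [mul_def, map_mul, Units.val_mul]
        linear_combination hf x.base y.base z.base
      · simp only [mul_def, mul_assoc])
    (fun x => by
      ext
      · simp [mul_def, one_def, f_one_left hf x.base]
      · simp [mul_def, one_def])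
    (fun x => by
      ext
      · simp only [mul_def, one_def, inv_def]; ring
      · simp [mul_def, one_def, inv_def])

end CocycleExt

/-- A cocycle on `G` is a coboundary as soon as the extension it defines has a homomorphic section
`s`: if `s(g) = (σ(g), g)`, then `f` is the coboundary of `-σ`. -/
theorem coboundary_of_section {G : Type*} [Group G] (ξ : G →* ℂˣ) (f : G × G → ℂ)
    (hf : ∀ g h j, f (g * h, j) + f (g, h) = ξ g * f (h, j) + f (g, h * j))
    (s : G →* CocycleExt ξ f hf) (hs : ∀ g, (s g).base = g) :
    ∃ σ : G → ℂ, ∀ g h, ξ g * σ h - σ (g * h) + σ g = f (g, h) := by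
  refine ⟨fun g => -(s g).val, fun g h => ?_⟩
  have h1 := congrArg CocycleExt.val (map_mul s g h)
  simp only [CocycleExt.mul_def, hs] at h1
  linear_combination h1

/-- Every 2-cocycle of `Γ_g` with values in `ℂ_ξ`, `ξ ≠ 1`, is a coboundary. -/
theorem cocycle_is_coboundary (g : ℕ) (ξ : SurfaceGroup g →* ℂˣ) (hξ : ξ ≠ 1)
    (f : SurfaceGroup g × SurfaceGroup g → ℂ)
    (hf : ∀ g h j, f (g * h, j) + f (g, h) = ξ g * f (h, j) + f (g, h * j)) :
    ∃ σ : SurfaceGroup g → ℂ, ∀ g h, ξ g * σ h - σ (g * h) + σ g = f (g, h) := by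
  let π : CocycleExt ξ f hf →* SurfaceGroup g :=
    MonoidHom.mk' CocycleExt.base fun _ _ => rfl
  obtain ⟨s, hs⟩ := exists_section g ξ hξ π (fun x => ⟨⟨0, x⟩, rfl⟩)
    (fun a => ⟨a - f (1, 1), 1⟩)
    (fun a b => by
      ext
      · simp [CocycleExt.mul_def]; ring
      · simp [CocycleExt.mul_def])
    (fun e he => ⟨e.val + f (1, 1), by
      ext
      · simp
      · exact he⟩)
    (fun _ => rfl)
    (fun e a => by
      have hπ : π e = e.base := rfl
      ext
      · simp only [CocycleExt.mul_def, hπ, CocycleExt.f_one_left hf e.base,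
          CocycleExt.f_one_right hf e.base, map_one, Units.val_one]
        ring
      · simp [CocycleExt.mul_def])
  exact coboundary_of_section ξ f hf s fun x => DFunLike.congr_fun hs x

/-- For `g ≥ 1` and a non-trivial character `ξ : Γ_g → ℂ*`, the second group
cohomology `H²(Γ_g, ℂ_ξ)` vanishes. -/
theorem stmt5 (g : ℕ) (hg : 1 ≤ g) (ξ : SurfaceGroup g →* ℂˣ) (hξ : ξ ≠ 1) :
    Subsingleton (groupCohomology (Rep.of (charRep ξ)) 2) := by
  refine subsingleton_of_forall_eq 0 fun x => ?_
  induction x using groupCohomology.H2_induction_on with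
  | h f =>
    rw [groupCohomology.H2π_eq_zero_iff]
    obtain ⟨σ, hσ⟩ := cocycle_is_coboundary g ξ hξ f.1 fun a b c =>
      (groupCohomology.mem_cocycles₂_iff (A := Rep.of (charRep ξ)) f.1).1 f.2 a b c
    exact ⟨σ, funext fun p => hσ p.1 p.2⟩
end

section
/- Let g ≥ 1 and let Γ_g be the surface group of genus g. For every character ξ: Γ_g → ℂ*, the group cohomology spaces Hⁱ(Γ_g, ℂ_ξ) for i = 0, 1, 2 are finite-dimensional complex vector spaces and dim H⁰(Γ_g, ℂ_ξ) − dim H¹(Γ_g, ℂ_ξ) + dim H²(Γ_g, ℂ_ξ) = 2 − 2g. -/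
namespace SurfaceCohomology

open groupCohomology

/-! ### Twisted extensions and primitives on the free group -/

/-- The inhomogeneous 2-cocycle condition for functions with values in `ℂ_ξ`. -/
def IsTwoCocycle {G : Type*} [Group G] (ξ : G →* ℂˣ) (f : G × G → ℂ) : Prop :=
  ∀ x y z : G, f (x * y, z) + f (x, y) = ξ x * f (y, z) + f (x, y * z)

/-- `φ : F → ℂ` is a primitive of the pullback of `f` along `p : F → G`, i.e. its coboundary
for the action through `ξ` is `f ∘ (p × p)`. -/
def IsPrimitive {F G : Type*} [Group F] [Group G] (p : F →* G) (ξ : G →* ℂˣ) (f : G × G → ℂ)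
    (φ : F → ℂ) : Prop :=
  ∀ x y : F, φ (x * y) = φ x + ξ (p x) * φ y - f (p x, p y)

/-- The underlying set `ℂ × G` of the extension of `G` by `ℂ_ξ` defined by the (not necessarily
normalized) 2-cocycle `f`. The cocycle condition is a parameter so that the type carries a
group structure. -/
@[ext]
structure TwistedProduct {G : Type*} [Group G] (ξ : G →* ℂˣ) (f : G × G → ℂ)
    (hf : IsTwoCocycle ξ f) where
  /-- The coordinate in the kernel `ℂ_ξ`. -/
  fst : ℂ
  /-- The image in `G`. -/
  snd : G

section Extension

variable {G : Type*} [Group G] {ξ : G →* ℂˣ} {f : G × G → ℂ}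

lemma IsTwoCocycle.one_left (hf : IsTwoCocycle ξ f) (y : G) : f (1, y) = f (1, 1) := by
  have := hf 1 1 y
  simp at this
  exact this.symm

lemma IsTwoCocycle.one_right (hf : IsTwoCocycle ξ f) (x : G) : f (x, 1) = ξ x * f (1, 1) := by
  have := hf x 1 1
  simp at this
  exact this

variable {hf : IsTwoCocycle ξ f}

instance : Mul (TwistedProduct ξ f hf) :=
  ⟨fun u v => ⟨u.fst + ξ u.snd * v.fst - f (u.snd, v.snd), u.snd * v.snd⟩⟩

instance : One (TwistedProduct ξ f hf) := ⟨⟨f (1, 1), 1⟩⟩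

noncomputable instance : Inv (TwistedProduct ξ f hf) :=
  ⟨fun u => ⟨f (1, 1) + f (u.snd⁻¹, u.snd) - ξ u.snd⁻¹ * u.fst, u.snd⁻¹⟩⟩

lemma TwistedProduct.mul_fst (u v : TwistedProduct ξ f hf) :
    (u * v).fst = u.fst + ξ u.snd * v.fst - f (u.snd, v.snd) := rfl

lemma TwistedProduct.mul_snd (u v : TwistedProduct ξ f hf) :
    (u * v).snd = u.snd * v.snd := rfl

lemma TwistedProduct.one_fst : (1 : TwistedProduct ξ f hf).fst = f (1, 1) := rfl

lemma TwistedProduct.one_snd : (1 : TwistedProduct ξ f hf).snd = 1 := rfl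

lemma TwistedProduct.inv_fst (u : TwistedProduct ξ f hf) :
    u⁻¹.fst = f (1, 1) + f (u.snd⁻¹, u.snd) - ξ u.snd⁻¹ * u.fst := rfl

lemma TwistedProduct.inv_snd (u : TwistedProduct ξ f hf) : u⁻¹.snd = u.snd⁻¹ := rfl

noncomputable instance : Group (TwistedProduct ξ f hf) :=
  Group.ofLeftAxioms
    (fun u v w => by
      ext
      · simp only [TwistedProduct.mul_fst, TwistedProduct.mul_snd, map_mul, Units.val_mul]
        linear_combination - hf u.snd v.snd w.snd
      · simp only [TwistedProduct.mul_snd, mul_assoc])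
    (fun u => by
      ext
      · simp only [TwistedProduct.mul_fst, TwistedProduct.one_snd, TwistedProduct.one_fst,
          hf.one_left, map_one, Units.val_one]
        ring
      · simp only [TwistedProduct.mul_snd, TwistedProduct.one_snd, one_mul])
    (fun u => by
      ext
      · simp only [TwistedProduct.mul_fst, TwistedProduct.inv_fst, TwistedProduct.inv_snd,
          TwistedProduct.one_fst]
        ring
      · simp only [TwistedProduct.mul_snd, TwistedProduct.inv_snd, TwistedProduct.one_snd,
          inv_mul_cancel])

/-- A 2-cocycle becomes a coboundary on a free group, with a primitive whose values on the free
generators are arbitrary: lift the free group to the extension defined by the cocycle. -/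
lemma exists_primitive (hf : IsTwoCocycle ξ f) {S : Type*} (p : FreeGroup S →* G) (v : S → ℂ) :
    ∃ φ : FreeGroup S → ℂ, IsPrimitive p ξ f φ ∧ ∀ s, φ (FreeGroup.of s) = v s := by
  let L : FreeGroup S →* TwistedProduct ξ f hf :=
    FreeGroup.lift fun s => ⟨v s, p (FreeGroup.of s)⟩
  let q : TwistedProduct ξ f hf →* G :=
    { toFun := TwistedProduct.snd, map_one' := rfl, map_mul' := fun _ _ => rfl }
  have hq : q.comp L = p := by
    ext s
    simp [L, q]
  have hL : ∀ x, (L x).snd = p x := fun x => DFunLike.congr_fun hq x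
  refine ⟨fun x => (L x).fst, fun x y => ?_, fun s => by simp [L]⟩
  simp only [map_mul, TwistedProduct.mul_fst, hL]

end Extension

/-! ### Descent to a one-relator quotient -/

section Descent

variable {S : Type*} {r : FreeGroup S}

/-- A primitive of a 2-cocycle of `⟨S | r⟩` on the free group descends to `⟨S | r⟩` as soon as
it takes the same value at `r` and at `1`. -/
lemma primitive_descends {ξ : PresentedGroup {r} →* ℂˣ}
    {f : PresentedGroup {r} × PresentedGroup {r} → ℂ} {φ : FreeGroup S → ℂ}
    (hφ : IsPrimitive (PresentedGroup.mk {r}) ξ f φ) (hr : φ r = φ 1) :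
    ∃ ψ : PresentedGroup {r} → ℂ, (∀ x, ψ (PresentedGroup.mk {r} x) = φ x) ∧
      ∀ x y, ψ (x * y) = ψ x + ξ x * ψ y - f (x, y) := by
  set p := PresentedGroup.mk {r}
  -- Comparing with the cases `x = 1`, respectively `y = 1`, of the primitive equation
  -- eliminates the values of `f` with one argument trivial.
  have hleft : ∀ x y, p x = 1 → φ (x * y) = φ x + φ y - φ 1 := by
    intro x y hx
    have h1 := hφ x y
    have h2 := hφ 1 y
    simp only [hx, map_one, one_mul, Units.val_one] at h1 h2
    linear_combination h1 - h2
  have hright : ∀ x y, p y = 1 → φ (x * y) = φ x + ξ (p x) * (φ y - φ 1) := by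
    intro x y hy
    have h1 := hφ x y
    have h2 := hφ x 1
    simp only [hy, map_one, mul_one] at h1 h2
    linear_combination h1 - h2
  let N : Subgroup (FreeGroup S) :=
    { carrier := {x | p x = 1 ∧ φ x = φ 1}
      one_mem' := ⟨map_one p, rfl⟩
      mul_mem' := by
        rintro x y ⟨hx, hx'⟩ ⟨hy, hy'⟩
        refine ⟨by rw [map_mul, hx, hy, one_mul], ?_⟩
        rw [hleft x y hx, hx', hy']
        ring
      inv_mem' := by
        rintro x ⟨hx, hx'⟩
        refine ⟨by rw [map_inv, hx, inv_one], ?_⟩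
        have := hleft x x⁻¹ hx
        rw [mul_inv_cancel, hx'] at this
        linear_combination -this }
  have hN : N.Normal := by
    refine ⟨fun x hx y => ?_⟩
    obtain ⟨hx, hx'⟩ := hx
    have hc : p (y * x * y⁻¹) = 1 := by simp [hx]
    refine ⟨hc, ?_⟩
    have h1 := hleft (y * x * y⁻¹) y hc
    have h2 := hright y x hx
    rw [inv_mul_cancel_right, h2, hx'] at h1
    linear_combination -h1
  have hker : Subgroup.normalClosure {r} ≤ N := by
    refine Subgroup.normalClosure_le_normal ?_
    rintro x rfl
    exact ⟨PresentedGroup.one_of_mem (by simp), hr⟩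
  have hfib : ∀ x y, p x = p y → φ x = φ y := by
    intro x y hxy
    have h1 : x * y⁻¹ ∈ N := by
      refine hker ?_
      rw [← PresentedGroup.mk_eq_one_iff, map_mul, map_inv]
      exact mul_inv_eq_one.2 hxy
    have h2 := hleft (x * y⁻¹) y h1.1
    rw [inv_mul_cancel_right, h1.2] at h2
    linear_combination h2
  have hsurj : Function.Surjective p := PresentedGroup.mk_surjective _
  have hψ : ∀ x, φ (Function.surjInv hsurj (p x)) = φ x := fun x =>
    hfib _ _ (Function.surjInv_eq hsurj _)
  refine ⟨fun x => φ (Function.surjInv hsurj x), hψ, fun x y => ?_⟩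
  obtain ⟨x, rfl⟩ := hsurj x
  obtain ⟨y, rfl⟩ := hsurj y
  simp only [← map_mul, hψ]
  exact hφ x y

end Descent

/-! ### Evaluation at the surface relator -/

section Surface

variable {g : ℕ}

/-- The projection from the free group on the `2g` generators to the surface group. -/
abbrev proj (g : ℕ) : FreeGroup (Fin g ⊕ Fin g) →* SurfaceGroup g :=
  PresentedGroup.mk {surfaceRelator g}

/-- The generator `aᵢ` (for `Sum.inl i`) or `bᵢ` (for `Sum.inr i`) of the surface group. -/
abbrev gen (s : Fin g ⊕ Fin g) : SurfaceGroup g := proj g (FreeGroup.of s)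

/-- The commutator `[aᵢ, bᵢ]` in the free group. -/
def comm (i : Fin g) : FreeGroup (Fin g ⊕ Fin g) :=
  FreeGroup.of (Sum.inl i) * FreeGroup.of (Sum.inr i) *
      (FreeGroup.of (Sum.inl i))⁻¹ * (FreeGroup.of (Sum.inr i))⁻¹

lemma comm_mul (i : Fin g) :
    comm i * (FreeGroup.of (Sum.inr i) * FreeGroup.of (Sum.inl i)) =
      FreeGroup.of (Sum.inl i) * FreeGroup.of (Sum.inr i) := by
  simp [comm, mul_assoc]

lemma map_comm_eq_one {A : Type*} [CommGroup A] (η : FreeGroup (Fin g ⊕ Fin g) →* A)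
    (i : Fin g) : η (comm i) = 1 := by
  simp [comm]

/-- If `f` vanishes at pairs with first entry a commutator `[aᵢ, bᵢ]`, a primitive of `f` is
additive along the surface relator, and each commutator contributes
`φ (aᵢ bᵢ) - φ (bᵢ aᵢ)`. -/
lemma primitive_relator {ξ : SurfaceGroup g →* ℂˣ} {f : SurfaceGroup g × SurfaceGroup g → ℂ}
    {φ : FreeGroup (Fin g ⊕ Fin g) → ℂ} (hφ : IsPrimitive (proj g) ξ f φ)
    (hf : ∀ i y, f (proj g (comm i), y) = 0) (h1 : φ 1 = 0) :
    φ (surfaceRelator g) = ∑ i : Fin g,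
      ((1 - ξ (gen (Sum.inr i))) * φ (FreeGroup.of (Sum.inl i)) +
        (ξ (gen (Sum.inl i)) - 1) * φ (FreeGroup.of (Sum.inr i)) -
        f (gen (Sum.inl i), gen (Sum.inr i)) + f (gen (Sum.inr i), gen (Sum.inl i))) := by
  have hadd : ∀ i y, φ (comm i * y) = φ (comm i) + φ y := by
    intro i y
    have hξ : ξ (proj g (comm i)) = 1 := map_comm_eq_one (ξ.comp (proj g)) i
    rw [hφ, hf, hξ]
    simp
  have hlist : ∀ l : List (Fin g), φ ((l.map comm).prod) = (l.map fun i => φ (comm i)).sum := by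
    intro l
    induction l with
    | nil => simpa using h1
    | cons i l ih => simp [hadd, ih]
  have hr : surfaceRelator g = ((List.finRange g).map comm).prod := by
    rw [← List.ofFn_eq_map]
    rfl
  refine (congrArg φ hr).trans ?_
  rw [hlist, ← List.ofFn_eq_map, List.sum_ofFn]
  refine Finset.sum_congr rfl fun i _ => ?_
  have h2 := hadd i (FreeGroup.of (Sum.inr i) * FreeGroup.of (Sum.inl i))
  rw [comm_mul, hφ, hφ] at h2
  linear_combination -h2

/-- The linear form `v ↦ ∑ᵢ (1 - ξ bᵢ) v(aᵢ) + (ξ aᵢ - 1) v(bᵢ)`, whose coefficients are the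
Fox derivatives of the surface relator evaluated at `ξ`. -/
noncomputable def foxForm (ξ : SurfaceGroup g →* ℂˣ) : ((Fin g ⊕ Fin g) → ℂ) →ₗ[ℂ] ℂ where
  toFun v := ∑ i : Fin g, ((1 - ξ (gen (Sum.inr i))) * v (Sum.inl i) +
    (ξ (gen (Sum.inl i)) - 1) * v (Sum.inr i))
  map_add' v w := by
    rw [← Finset.sum_add_distrib]
    refine Finset.sum_congr rfl fun i _ => ?_
    simp only [Pi.add_apply]
    ring
  map_smul' c v := by
    rw [RingHom.id_apply, smul_eq_mul, Finset.mul_sum]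
    refine Finset.sum_congr rfl fun i _ => ?_
    simp only [Pi.smul_apply, smul_eq_mul]
    ring

lemma IsPrimitive.map_one {F G : Type*} [Group F] [Group G] {p : F →* G} {ξ : G →* ℂˣ}
    {φ : F → ℂ} (hφ : IsPrimitive p ξ (fun _ => 0) φ) : φ 1 = 0 := by
  simpa using hφ 1 1

lemma crossed_relator {ξ : SurfaceGroup g →* ℂˣ} {φ : FreeGroup (Fin g ⊕ Fin g) → ℂ}
    (hφ : IsPrimitive (proj g) ξ (fun _ => 0) φ) :
    φ (surfaceRelator g) = foxForm ξ fun s => φ (FreeGroup.of s) := by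
  rw [primitive_relator hφ (fun _ _ => rfl) hφ.map_one]
  simp [foxForm]

lemma isTwoCocycle_zero {G : Type*} [Group G] (ξ : G →* ℂˣ) :
    IsTwoCocycle ξ (fun _ => 0) := by
  intro x y z
  simp

/-- Crossed homomorphisms on the surface group exist with any values on the generators that
are killed by the Fox form. -/
lemma exists_crossed {ξ : SurfaceGroup g →* ℂˣ} {v : (Fin g ⊕ Fin g) → ℂ}
    (hv : foxForm ξ v = 0) :
    ∃ ψ : SurfaceGroup g → ℂ, (∀ x y, ψ (x * y) = ψ x + ξ x * ψ y) ∧ ∀ s, ψ (gen s) = v s := by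
  obtain ⟨φ, hφ, hφv⟩ := exists_primitive (isTwoCocycle_zero ξ) (proj g) v
  obtain ⟨ψ, hψ, hψ'⟩ := primitive_descends hφ (by
    rw [crossed_relator hφ, hφ.map_one, funext hφv, hv])
  exact ⟨ψ, fun x y => by rw [hψ', sub_zero], fun s => by rw [hψ, hφv]⟩

lemma foxForm_single_inl [DecidableEq (Fin g ⊕ Fin g)] (ξ : SurfaceGroup g →* ℂˣ) (i : Fin g) :
    foxForm ξ (Pi.single (Sum.inl i) 1) = 1 - ξ (gen (Sum.inr i)) := by
  simp [foxForm, Pi.single_apply]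

lemma foxForm_single_inr [DecidableEq (Fin g ⊕ Fin g)] (ξ : SurfaceGroup g →* ℂˣ) (i : Fin g) :
    foxForm ξ (Pi.single (Sum.inr i) 1) = ξ (gen (Sum.inl i)) - 1 := by
  simp [foxForm, Pi.single_apply]

lemma eq_one_of_foxForm_eq_zero {ξ : SurfaceGroup g →* ℂˣ} (h : foxForm ξ = 0) : ξ = 1 := by
  classical
  refine PresentedGroup.ext fun s => Units.ext ?_
  rcases s with i | i
  · have := foxForm_single_inr ξ i
    rw [h] at this
    exact (sub_eq_zero.1 this.symm)
  · have := foxForm_single_inl ξ i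
    rw [h] at this
    exact (sub_eq_zero.1 this.symm).symm

end Surface

/-! ### Cohomology in degrees zero and one -/

section LowDegree

variable {g : ℕ} (ξ : SurfaceGroup g →* ℂˣ)

/-- The module `ℂ_ξ` as an object of the category of representations. -/
noncomputable abbrev charMod : Rep ℂ (SurfaceGroup g) := Rep.of (charRep ξ)

lemma mem_cocycles₁ (z : SurfaceGroup g → ℂ) :
    z ∈ cocycles₁ (charMod ξ) ↔ ∀ x y, z (x * y) = z x + ξ x * z y := by
  refine (mem_cocycles₁_iff (A := charMod ξ) z).trans ?_
  refine forall_congr' fun x => forall_congr' fun y => ?_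
  change _ = (ξ x : ℂ) * z y + z x ↔ _
  rw [add_comm]

lemma mem_cocycles₂ (f : SurfaceGroup g × SurfaceGroup g → ℂ) :
    f ∈ cocycles₂ (charMod ξ) ↔ IsTwoCocycle ξ f :=
  mem_cocycles₂_iff (A := charMod ξ) f

lemma mem_coboundaries₂ (f : SurfaceGroup g × SurfaceGroup g → ℂ) :
    f ∈ coboundaries₂ (charMod ξ) ↔
      ∃ ψ : SurfaceGroup g → ℂ, ∀ x y, ψ (x * y) = ψ x + ξ x * ψ y - f (x, y) := by
  constructor
  · rintro ⟨ψ, rfl⟩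
    refine ⟨ψ, fun x y => ?_⟩
    change _ = ψ x + ξ x * ψ y - ((ξ x : ℂ) * ψ y - ψ (x * y) + ψ x)
    ring
  · rintro ⟨ψ, h⟩
    refine ⟨ψ, funext fun ⟨x, y⟩ => ?_⟩
    change (ξ x : ℂ) * ψ y - ψ (x * y) + ψ x = f (x, y)
    rw [h]
    ring

/-- `Z¹(Γ, ℂ_ξ)` is the kernel of the Fox form, by restriction to the generators. -/
noncomputable def cocyclesEquiv :
    cocycles₁ (charMod ξ) ≃ₗ[ℂ] LinearMap.ker (foxForm ξ) := by
  let R : cocycles₁ (charMod ξ) →ₗ[ℂ] ((Fin g ⊕ Fin g) → ℂ) :=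
    { toFun := fun z s => z.1 (gen s)
      map_add' := fun _ _ => rfl
      map_smul' := fun _ _ => rfl }
  have hR : ∀ z, R z ∈ LinearMap.ker (foxForm ξ) := by
    intro z
    have hz := (mem_cocycles₁ ξ z.1).1 z.2
    have hφ : IsPrimitive (proj g) ξ (fun _ => 0) (fun x => z.1 (proj g x)) := fun x y => by
      simp only [map_mul, hz, sub_zero]
    have h := crossed_relator hφ
    have h1 : proj g (surfaceRelator g) = 1 := PresentedGroup.one_of_mem (by simp)
    have h2 := hφ.map_one
    rw [h1, ← map_one (proj g), h2] at h
    exact h.symm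
  refine LinearEquiv.ofBijective (R.codRestrict _ hR) ⟨?_, ?_⟩
  · rw [← LinearMap.ker_eq_bot, LinearMap.ker_codRestrict, LinearMap.ker_eq_bot']
    intro z hz
    have hz' := (mem_cocycles₁ ξ z.1).1 z.2
    have hone : z.1 1 = 0 := cocycles₁_map_one z
    let K : Subgroup (SurfaceGroup g) :=
      { carrier := {x | z.1 x = 0}
        one_mem' := hone
        mul_mem' := fun {x y} hx hy => by
          change z.1 (x * y) = 0
          rw [hz', show z.1 x = 0 from hx, show z.1 y = 0 from hy]
          ring
        inv_mem' := fun {x} hx => by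
          change z.1 x⁻¹ = 0
          have := hz' x⁻¹ x
          rw [inv_mul_cancel, hone, show z.1 x = 0 from hx] at this
          linear_combination -this }
    have hK := PresentedGroup.generated_by _ K (fun s => congrFun hz s)
    exact Subtype.ext (funext hK)
  · rintro ⟨v, hv⟩
    obtain ⟨ψ, hψ, hψv⟩ := exists_crossed (LinearMap.mem_ker.1 hv)
    exact ⟨⟨ψ, (mem_cocycles₁ ξ ψ).2 hψ⟩, Subtype.ext (funext hψv)⟩

lemma finiteDimensional_cocycles₁ : FiniteDimensional ℂ (cocycles₁ (charMod ξ)) :=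
  LinearEquiv.finiteDimensional (cocyclesEquiv ξ).symm

lemma finrank_cocycles₁ :
    Module.finrank ℂ (LinearMap.range (foxForm ξ)) +
      Module.finrank ℂ (cocycles₁ (charMod ξ)) = 2 * g := by
  rw [(cocyclesEquiv ξ).finrank_eq, LinearMap.finrank_range_add_finrank_ker]
  simp [two_mul]

lemma finiteDimensional_H0 : FiniteDimensional ℂ (groupCohomology (charMod ξ) 0) :=
  have : FiniteDimensional ℂ (charMod ξ).V := inferInstanceAs (FiniteDimensional ℂ ℂ)
  LinearEquiv.finiteDimensional (H0Iso (charMod ξ)).toLinearEquiv.symm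

lemma finiteDimensional_H1 : FiniteDimensional ℂ (groupCohomology (charMod ξ) 1) :=
  have := finiteDimensional_cocycles₁ ξ
  Module.Finite.of_surjective (H1π (charMod ξ)).hom
    ((ModuleCat.epi_iff_surjective _).1 inferInstance)

/-- `dim H⁰ + dim Z¹ = dim H¹ + 1`: both `dim Z¹ - dim H¹` and `1 - dim H⁰` are `dim B¹`. -/
lemma finrank_H0_H1 :
    Module.finrank ℂ (groupCohomology (charMod ξ) 0) +
        Module.finrank ℂ (cocycles₁ (charMod ξ)) =
      Module.finrank ℂ (groupCohomology (charMod ξ) 1) + 1 := by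
  have := finiteDimensional_cocycles₁ ξ
  have : FiniteDimensional ℂ (charMod ξ).V := inferInstanceAs (FiniteDimensional ℂ ℂ)
  have hV : Module.finrank ℂ (charMod ξ).V = 1 := Module.finrank_self ℂ
  have h0 : Module.finrank ℂ (groupCohomology (charMod ξ) 0) =
      Module.finrank ℂ (LinearMap.ker (d₀₁ (charMod ξ)).hom) := by
    rw [d₀₁_ker_eq_invariants]
    exact (H0Iso (charMod ξ)).toLinearEquiv.finrank_eq
  have h1 := LinearMap.finrank_range_add_finrank_ker (d₀₁ (charMod ξ)).hom
  have h2 := LinearMap.finrank_range_add_finrank_ker (H1π (charMod ξ)).hom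
  have h3 : LinearMap.range (H1π (charMod ξ)).hom = ⊤ :=
    LinearMap.range_eq_top.2 ((ModuleCat.epi_iff_surjective _).1 inferInstance)
  have h4 : LinearMap.ker (H1π (charMod ξ)).hom =
      (coboundaries₁ (charMod ξ)).comap (cocycles₁ (charMod ξ)).subtype := by
    ext z
    exact H1π_eq_zero_iff z
  have h5 : Module.finrank ℂ (LinearMap.ker (H1π (charMod ξ)).hom) =
      Module.finrank ℂ (LinearMap.range (d₀₁ (charMod ξ)).hom) := by
    rw [h4]
    exact (Submodule.comapSubtypeEquivOfLe (coboundaries₁_le_cocycles₁ (charMod ξ))).finrank_eq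
  rw [h3, finrank_top] at h2
  change _ + _ = Module.finrank ℂ (charMod ξ).V at h1
  change Module.finrank ℂ (groupCohomology (charMod ξ) 1) + _ =
    Module.finrank ℂ (cocycles₁ (charMod ξ)) at h2
  omega

/-! ### Cohomology in degree two -/

/-- If the Fox form is nonzero, every 2-cocycle has a primitive with `φ r = φ 1`, so it is a
coboundary. -/
lemma subsingleton_H2 (h : foxForm ξ ≠ 0) :
    Subsingleton (groupCohomology (charMod ξ) 2) := by
  refine subsingleton_of_forall_eq 0 fun c => ?_
  induction c using H2_induction_on with | h f => ?_
  rw [H2π_eq_zero_iff]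
  refine (mem_coboundaries₂ ξ f.1).2 ?_
  have hf := (mem_cocycles₂ ξ f.1).1 f.2
  obtain ⟨φ, hφ, -⟩ := exists_primitive hf (proj g) 0
  obtain ⟨v, hv⟩ := LinearMap.surjective h (φ (surfaceRelator g) - φ 1)
  obtain ⟨φ', hφ', hφv⟩ := exists_primitive (isTwoCocycle_zero ξ) (proj g) v
  have hd : IsPrimitive (proj g) ξ f.1 (fun x => φ x - φ' x) := by
    intro x y
    linear_combination hφ x y - hφ' x y
  obtain ⟨ψ, -, hψ⟩ := primitive_descends hd (by
    rw [crossed_relator hφ', funext hφv, hv, hφ'.map_one]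
    ring)
  exact ⟨ψ, hψ⟩

/-- If the Fox form vanishes, the character is trivial and `H²` is spanned by the nonzero
class of the Heisenberg cocycle. -/
lemma finrank_H2_eq_one (hg : 1 ≤ g) (h : foxForm ξ = 0) :
    Module.finrank ℂ (groupCohomology (charMod ξ) 2) = 1 := by
  classical
  have hξ := eq_one_of_foxForm_eq_zero h
  let i₀ : Fin g := ⟨0, hg⟩
  obtain ⟨α, hα, hαv⟩ := exists_crossed (ξ := ξ) (v := Pi.single (Sum.inl i₀) 1) (by rw [h]; rfl)
  obtain ⟨β, hβ, hβv⟩ := exists_crossed (ξ := ξ) (v := Pi.single (Sum.inr i₀) 1) (by rw [h]; rfl)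
  have hαc : ∀ i, α (proj g (comm i)) = 0 := by
    intro i
    have := hα (proj g (comm i))
      (proj g (FreeGroup.of (Sum.inr i) * FreeGroup.of (Sum.inl i)))
    rw [← map_mul, comm_mul, map_mul, map_mul, hα, hα] at this
    simp only [hξ, MonoidHom.one_apply, Units.val_one] at this
    linear_combination -this
  have hα1 : α 1 = 0 := by simpa using hα 1 1
  let f₀ : SurfaceGroup g × SurfaceGroup g → ℂ := fun x => α x.1 * β x.2
  have hf₀ : IsTwoCocycle ξ f₀ := by
    intro x y z
    simp only [f₀, hα, hβ, hξ, MonoidHom.one_apply, Units.val_one]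
    ring
  obtain ⟨φ₀, hφ₀, hφ₀v⟩ := exists_primitive hf₀ (proj g) 0
  have hφ₀1 : φ₀ 1 = 0 := by
    have := hφ₀ 1 1
    simpa [f₀, hα1] using this
  have hφ₀r : φ₀ (surfaceRelator g) = -1 := by
    rw [primitive_relator hφ₀ (fun i y => by simp [f₀, hαc]) hφ₀1]
    simp [f₀, hφ₀v, hαv, hβv, Pi.single_apply]
  let F₀ : cocycles₂ (charMod ξ) := ⟨f₀, (mem_cocycles₂ ξ f₀).2 hf₀⟩
  refine finrank_eq_one (H2π (charMod ξ) F₀) ?_ ?_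
  · intro h0
    rw [H2π_eq_zero_iff] at h0
    obtain ⟨ψ, hψ⟩ := (mem_coboundaries₂ ξ f₀).1 h0
    have hψ1 : ψ 1 = 0 := by
      have := hψ 1 1
      simpa [f₀, hα1] using this
    -- The difference of the two primitives is a crossed homomorphism, so it vanishes at `r`.
    have hd : IsPrimitive (proj g) ξ (fun _ => 0) (fun x => φ₀ x - ψ (proj g x)) := by
      intro x y
      simp only [hφ₀ x y, map_mul, hψ]
      ring
    have h2 := crossed_relator hd
    have h1 : proj g (surfaceRelator g) = 1 := PresentedGroup.one_of_mem (by simp)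
    rw [h1, hψ1, hφ₀r, h] at h2
    simp at h2
  · intro c
    induction c using H2_induction_on with | h f => ?_
    have hf := (mem_cocycles₂ ξ f.1).1 f.2
    obtain ⟨φ, hφ, -⟩ := exists_primitive hf (proj g) 0
    -- The scalar is chosen so that `φ - t φ₀` takes equal values at `r` and `1`.
    let t : ℂ := φ 1 - φ (surfaceRelator g)
    have hd : IsPrimitive (proj g) ξ (fun x => f.1 x - t * f₀ x) (fun x => φ x - t * φ₀ x) := by
      intro x y
      linear_combination hφ x y - t * hφ₀ x y
    obtain ⟨ψ, -, hψ⟩ := primitive_descends hd (by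
      rw [hφ₀r, hφ₀1]
      ring)
    refine ⟨t, ?_⟩
    rw [← map_smul, eq_comm, H2π_eq_iff]
    exact (mem_coboundaries₂ ξ (fun x => f.1 x - t * f₀ x)).2 ⟨ψ, hψ⟩

end LowDegree

end SurfaceCohomology

/-- For `g ≥ 1` and any character `ξ : Γ_g → ℂ*`, the cohomology spaces
`Hⁱ(Γ_g, ℂ_ξ)`, `i = 0, 1, 2`, are finite-dimensional and
`dim H⁰ − dim H¹ + dim H² = 2 − 2g`. -/
theorem stmt6 (g : ℕ) (hg : 1 ≤ g) (ξ : SurfaceGroup g →* ℂˣ) :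
    (FiniteDimensional ℂ (groupCohomology (Rep.of (charRep ξ)) 0) ∧
        FiniteDimensional ℂ (groupCohomology (Rep.of (charRep ξ)) 1) ∧
        FiniteDimensional ℂ (groupCohomology (Rep.of (charRep ξ)) 2)) ∧
      (Module.finrank ℂ (groupCohomology (Rep.of (charRep ξ)) 0) : ℤ) -
          (Module.finrank ℂ (groupCohomology (Rep.of (charRep ξ)) 1) : ℤ) +
          (Module.finrank ℂ (groupCohomology (Rep.of (charRep ξ)) 2) : ℤ) =
        2 - 2 * (g : ℤ) := by
  have h0 := SurfaceCohomology.finiteDimensional_H0 ξ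
  have h1 := SurfaceCohomology.finiteDimensional_H1 ξ
  have hZ : Module.finrank ℂ (LinearMap.range (SurfaceCohomology.foxForm ξ)) +
      Module.finrank ℂ (groupCohomology.cocycles₁ (Rep.of (charRep ξ))) = 2 * g :=
    SurfaceCohomology.finrank_cocycles₁ ξ
  have hE : Module.finrank ℂ (groupCohomology (Rep.of (charRep ξ)) 0) +
      Module.finrank ℂ (groupCohomology.cocycles₁ (Rep.of (charRep ξ))) =
        Module.finrank ℂ (groupCohomology (Rep.of (charRep ξ)) 1) + 1 :=
    SurfaceCohomology.finrank_H0_H1 ξ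
  suffices h2 : FiniteDimensional ℂ (groupCohomology (Rep.of (charRep ξ)) 2) ∧
      Module.finrank ℂ (groupCohomology (Rep.of (charRep ξ)) 2) +
        Module.finrank ℂ (LinearMap.range (SurfaceCohomology.foxForm ξ)) = 1 by
    refine ⟨⟨h0, h1, h2.1⟩, ?_⟩
    have h2' := h2.2
    omega
  by_cases hD : SurfaceCohomology.foxForm ξ = 0
  · have h := SurfaceCohomology.finrank_H2_eq_one ξ hg hD
    refine ⟨Module.finite_of_finrank_eq_succ h, ?_⟩
    rw [h, hD, LinearMap.range_zero, finrank_bot]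
  · have := SurfaceCohomology.subsingleton_H2 ξ hD
    refine ⟨inferInstance, ?_⟩
    rw [Module.finrank_zero_of_subsingleton,
      LinearMap.range_eq_top.2 (LinearMap.surjective hD), finrank_top, Module.finrank_self]
end

section
/- Let g ≥ 1, let Γ_g be the surface group of genus g, and let ξ: Γ_g → ℂ* be a non-trivial character. Let R be a group and φ: R → Γ_g a surjective group homomorphism, and suppose there is a group isomorphism κ from ker(φ) onto the additive group ℂ such that κ(r x r⁻¹) = ξ(φ(r))·κ(x) for all r ∈ R and x ∈ ker(φ). Then φ splits: there exists a group homomorphism σ: Γ_g → R with φ ∘ σ = id. -/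
theorem prod_update_mul {ι M : Type*} [DecidableEq ι] [Monoid M] (f : ι → M) (z : M)
    (hz : ∀ i, f i * z = z * f i) (j : ι) (l : List ι) (hl : l.Nodup) (hj : j ∈ l) :
    (l.map (Function.update f j (z * f j))).prod = z * (l.map f).prod := by
  induction l with
  | nil => simp at hj
  | cons a l ih =>
    rw [List.nodup_cons] at hl
    by_cases h : a = j
    · subst h
      have h2 : l.map (Function.update f a (z * f a)) = l.map f := by
        apply List.map_congr_left
        intro b hb
        rw [Function.update_of_ne]
        rintro rfl
        exact hl.1 hb
      simp [h2, mul_assoc]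
    · have hj' : j ∈ l := by
        rcases List.mem_cons.1 hj with h' | h'
        · exact absurd h'.symm h
        · exact h'
      rw [List.map_cons, List.prod_cons, ih hl.2 hj', Function.update_of_ne h, List.map_cons,
        List.prod_cons, ← mul_assoc, hz, mul_assoc]

/-- Here `E` parametrizes a normal subgroup by `ℂ`, on which `R` acts through the character `c`.
If `c` is non-trivial on `A` or `B`, then changing `A` and `B` by elements of that subgroup
multiplies their commutator by any prescribed element of it. -/
theorem exists_commutator_eq_mul {R : Type*} [Group R] (E : ℂ → R) (c : R →* ℂˣ)
    (hE : ∀ s t, E (s + t) = E s * E t)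
    (hc : ∀ r t, r * E t = E ((c r : ℂ) * t) * r) (A B : R) (h : c A ≠ 1 ∨ c B ≠ 1) (t : ℂ) :
    ∃ x y : ℂ, (E x * A) * (E y * B) * (E x * A)⁻¹ * (E y * B)⁻¹
      = E t * (A * B * A⁻¹ * B⁻¹) := by
  have h0 : E 0 = 1 := by simpa using hE 0 0
  have hinv : ∀ s, (E s)⁻¹ = E (-s) := fun s => by
    rw [inv_eq_iff_mul_eq_one, ← hE, add_neg_cancel, h0]
  rcases h with h | h
  · have hne : (c A : ℂ) - 1 ≠ 0 := fun h' => h (Units.ext (by simpa using sub_eq_zero.1 h'))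
    refine ⟨0, t / ((c A : ℂ) - 1), ?_⟩
    set y := t / ((c A : ℂ) - 1) with hy
    have h1 : (c A : ℂ) * y + -y = t := by rw [hy]; field_simp; ring
    have h2 := hc (A * B * A⁻¹ * B⁻¹) (-y)
    have h3 : c (A * B * A⁻¹ * B⁻¹) = 1 := by
      simp only [map_mul, map_inv]; rw [mul_comm (c A)]; simp
    rw [h3, Units.val_one, one_mul] at h2
    calc (E 0 * A) * (E y * B) * (E 0 * A)⁻¹ * (E y * B)⁻¹
        = (A * E y) * B * A⁻¹ * B⁻¹ * E (-y) := by rw [h0, ← hinv]; group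
      _ = E ((c A : ℂ) * y) * ((A * B * A⁻¹ * B⁻¹) * E (-y)) := by rw [hc A y]; group
      _ = _ := by rw [h2, ← mul_assoc, ← hE, h1]
  · have hne : 1 - (c B : ℂ) ≠ 0 :=
      fun h' => h (Units.ext (by simpa using (sub_eq_zero.1 h').symm))
    refine ⟨t / (1 - (c B : ℂ)), 0, ?_⟩
    set x := t / (1 - (c B : ℂ)) with hx
    have h1 : x + (c B : ℂ) * -x = t := by rw [hx]; field_simp; ring
    have h2 := hc (A * B * A⁻¹) (-x)
    have h3 : c (A * B * A⁻¹) = c B := by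
      simp only [map_mul, map_inv]; rw [mul_comm (c A)]; simp
    rw [h3] at h2
    calc (E x * A) * (E 0 * B) * (E x * A)⁻¹ * (E 0 * B)⁻¹
        = E x * ((A * B * A⁻¹) * E (-x)) * B⁻¹ := by rw [h0, ← hinv]; group
      _ = (E x * E ((c B : ℂ) * -x)) * (A * B * A⁻¹ * B⁻¹) := by rw [h2]; group
      _ = _ := by rw [← hE, h1]

theorem lift_surfaceRelator {G : Type*} [Group G] (g : ℕ) (f : Fin g ⊕ Fin g → G) :
    FreeGroup.lift f (surfaceRelator g) =
      ((List.finRange g).map fun i =>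
        f (Sum.inl i) * f (Sum.inr i) * (f (Sum.inl i))⁻¹ * (f (Sum.inr i))⁻¹).prod := by
  rw [surfaceRelator, map_list_prod, List.map_ofFn, List.ofFn_eq_map]
  congr 2
  funext i
  simp

/-- If `φ : R → Γ_g` is a surjective homomorphism whose kernel is isomorphic,
as a group, to the additive group `ℂ`, via an isomorphism `κ` intertwining conjugation on
`ker φ` with multiplication by the non-trivial character `ξ ∘ φ`, then `φ` splits. -/
theorem stmt7 (g : ℕ) (hg : 1 ≤ g) (ξ : SurfaceGroup g →* ℂˣ) (hξ : ξ ≠ 1)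
    {R : Type*} [Group R] (φ : R →* SurfaceGroup g) (hφ : Function.Surjective φ)
    (κ : φ.ker → ℂ) (hbij : Function.Bijective κ)
    (hadd : ∀ x y : φ.ker, κ (x * y) = κ x + κ y)
    (hconj : ∀ (r : R) (x : R) (hx : x ∈ φ.ker),
      κ ⟨r * x * r⁻¹, (MonoidHom.normal_ker φ).conj_mem x hx r⟩ =
        (ξ (φ r) : ℂ) * κ ⟨x, hx⟩) :
    ∃ σ : SurfaceGroup g →* R, φ.comp σ = MonoidHom.id (SurfaceGroup g) := by
  classical
  -- `E` is the inverse of `κ`, regarded as a map into `R`.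
  obtain ⟨K, hKl, hKr⟩ := Function.bijective_iff_has_inverse.1 hbij
  let E : ℂ → R := fun t => (K t : R)
  have hE : ∀ s t, E (s + t) = E s * E t := fun s t => by
    have : K (s + t) = K s * K t := hbij.1 (by rw [hadd, hKr, hKr, hKr])
    simp [E, this]
  have hE0 : E 0 = 1 := by simpa using hE 0 0
  have hEφ : ∀ t, φ (E t) = 1 := fun t => (K t).2
  have hEsurj : ∀ r, φ r = 1 → ∃ t, E t = r := fun r hr =>
    ⟨κ ⟨r, hr⟩, by simp only [E]; rw [hKl]⟩
  let c : R →* ℂˣ := ξ.comp φ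
  have hc : ∀ r t, r * E t = E ((c r : ℂ) * t) * r := fun r t => by
    have h1 := hconj r (E t) (K t).2
    have h2 : κ ⟨E t, (K t).2⟩ = t := hKr t
    rw [h2] at h1
    have h3 : E ((c r : ℂ) * t) = r * E t * r⁻¹ := by
      change (K ((ξ (φ r) : ℂ) * t) : R) = _
      rw [← h1, hKl]
    rw [h3]; group
  obtain ⟨s, hs⟩ := hφ.hasRightInverse
  let f : Fin g ⊕ Fin g → R := fun i => s (PresentedGroup.of i)
  have hf : ∀ i, φ (f i) = PresentedGroup.of i := fun i => hs _
  obtain ⟨j, hj⟩ : ∃ j : Fin g, c (f (Sum.inl j)) ≠ 1 ∨ c (f (Sum.inr j)) ≠ 1 := by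
    by_contra! hcon
    apply hξ
    ext i
    rcases i with i | i
    · simpa [c, hf] using congrArg Units.val (hcon i).1
    · simpa [c, hf] using congrArg Units.val (hcon i).2
  let C : (Fin g ⊕ Fin g → R) → Fin g → R := fun f i =>
    f (Sum.inl i) * f (Sum.inr i) * (f (Sum.inl i))⁻¹ * (f (Sum.inr i))⁻¹
  have hφlift : φ (FreeGroup.lift f (surfaceRelator g)) = 1 := by
    have h1 : φ.comp (FreeGroup.lift f) = PresentedGroup.mk {surfaceRelator g} := by
      ext i
      rw [MonoidHom.comp_apply, FreeGroup.lift_apply_of, hf i]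
      rfl
    rw [← MonoidHom.comp_apply, h1]
    exact PresentedGroup.one_of_mem rfl
  obtain ⟨t, ht⟩ := hEsurj _ hφlift
  obtain ⟨x, y, hxy⟩ := exists_commutator_eq_mul E c hE hc _ _ hj (-t)
  let f' : Fin g ⊕ Fin g → R := Function.update (Function.update f (Sum.inl j)
    (E x * f (Sum.inl j))) (Sum.inr j) (E y * f (Sum.inr j))
  have hf' : ∀ i, φ (f' i) = PresentedGroup.of i := by
    intro i
    by_cases h1 : i = Sum.inr j
    · subst h1; simp [f', hEφ, hf]
    · by_cases h2 : i = Sum.inl j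
      · subst h2; simp [f', hEφ, hf]
      · simp [f', h1, h2, hf]
  have hC : C f' = Function.update (C f) j (E (-t) * C f j) := by
    funext i
    by_cases h : i = j
    · subst h
      simpa [C, f'] using hxy
    · simp [C, f', h]
  have hcomm : ∀ i, C f i * E (-t) = E (-t) * C f i := fun i => by
    have h3 : c (C f i) = 1 := by
      simp only [C, map_mul, map_inv]; rw [mul_comm (c (f (Sum.inl i)))]; simp
    rw [hc, h3, Units.val_one, one_mul]
  have hrel : FreeGroup.lift f' (surfaceRelator g) = 1 := by
    rw [lift_surfaceRelator] at ht ⊢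
    change ((List.finRange g).map (C f')).prod = 1
    change E t = ((List.finRange g).map (C f)).prod at ht
    rw [hC, prod_update_mul _ _ hcomm j _ (List.nodup_finRange g) (List.mem_finRange j), ← ht,
      ← hE, neg_add_cancel, hE0]
  refine ⟨PresentedGroup.toGroup (f := f') (by rintro r rfl; exact hrel), ?_⟩
  ext i
  simp [hf']
end

section
/- Let k ≥ 1 and let v₁, …, v_{2k} ∈ ℂ^k be a basis of ℂ^k as a real vector space. Let Λ be the additive subgroup of ℂ^k generated by v₁, …, v_{2k}, and let f: ℂ^k → ℂ be a ℂ-linear map. If the image f(Λ) is a cyclic subgroup of the additive group ℂ, then f = 0. -/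
/-!
The image `f(Λ)` lies in `ℤ c`, and `Λ` spans `ℂ^k` over `ℝ`, so `f` takes all its values in the
real line `ℝ c`. But the image of the `ℂ`-linear map `f` is a complex subspace of `ℂ`, so if `f`
were nonzero it would contain both `1` and `I`, which lie on no common real line through `0`.
-/

/-- If `Λ ⊂ ℂ^k` is the additive subgroup generated by an `ℝ`-basis
`v₁, …, v_{2k}` of `ℂ^k` and `f : ℂ^k → ℂ` is `ℂ`-linear with `f(Λ)` a cyclic subgroup of
`(ℂ, +)`, then `f = 0`. -/
theorem stmt10 {k : ℕ} (hk : 1 ≤ k) (v : Fin (2 * k) → (Fin k → ℂ))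
    (hind : LinearIndependent ℝ v)
    (hspan : Submodule.span ℝ (Set.range v) = ⊤)
    (f : (Fin k → ℂ) →ₗ[ℂ] ℂ)
    (hcyc : ∃ c : ℂ,
      AddSubgroup.map f.toAddMonoidHom (AddSubgroup.closure (Set.range v)) =
        AddSubgroup.closure {c}) :
    f = 0 := by
  obtain ⟨c, hc⟩ := hcyc
  have hline : ∀ x, ∃ r : ℝ, f x = r * c := by
    intro x
    have hx : x ∈ Submodule.span ℝ (Set.range v) := hspan ▸ Submodule.mem_top
    induction hx using Submodule.span_induction with
    | mem x hx =>
      have hmem : f x ∈ AddSubgroup.closure {c} :=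
        hc ▸ ⟨x, AddSubgroup.subset_closure hx, rfl⟩
      obtain ⟨n, hn⟩ := AddSubgroup.mem_closure_singleton.1 hmem
      exact ⟨n, by rw [← hn]; simp⟩
    | zero => exact ⟨0, by simp⟩
    | add x y _ _ hx hy =>
      obtain ⟨a, ha⟩ := hx
      obtain ⟨b, hb⟩ := hy
      exact ⟨a + b, by rw [map_add, ha, hb]; push_cast; ring⟩
    | smul t x _ hx =>
      obtain ⟨a, ha⟩ := hx
      refine ⟨t * a, ?_⟩
      have ht : t • x = (t : ℂ) • x := by ext i; simp
      rw [ht, map_smul, ha, smul_eq_mul]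
      push_cast
      ring
  ext1 x
  by_contra hne
  have hfx : f (Pi.single x 1) ≠ 0 := fun h => hne (by ext; simpa using h)
  obtain ⟨a, ha⟩ := hline ((f (Pi.single x 1))⁻¹ • Pi.single x 1)
  obtain ⟨b, hb⟩ := hline ((Complex.I * (f (Pi.single x 1))⁻¹) • Pi.single x 1)
  rw [map_smul, smul_eq_mul, inv_mul_cancel₀ hfx] at ha
  rw [map_smul, smul_eq_mul, mul_assoc, inv_mul_cancel₀ hfx, mul_one] at hb
  -- Eliminating `c` from `1 = a c` and `I = b c` makes `a I = b` real, which forces `a = 0`.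
  have hab : (a : ℂ) * Complex.I = b := by
    rw [hb, mul_left_comm, ← ha, mul_one]
  have ha0 : a = 0 := by simpa using congrArg Complex.im hab
  simp [ha0] at ha
end

section
/- Let G be a group, s: G → GL_k(ℤ) a group homomorphism, ξ: G → ℂ* a character, and ψ: ℤ^k → ℂ a non-zero additive group homomorphism satisfying ψ(s(g)·a) = ξ(g)·ψ(a) for all g ∈ G and a ∈ ℤ^k. Then for every g ∈ G, ξ(g) is a root of the characteristic polynomial of the complex matrix obtained from s(g) by mapping its integer entries into ℂ (i.e., ξ(g) is an eigenvalue of s(g)); in particular, every ξ(g) is an algebraic integer (integral over ℤ). -/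
/-! The vector `v` of values of `ψ` on the standard basis of `ℤ^k` satisfies `ψ a = ∑ i, a i * v i`,
so it is non-zero because `ψ` is. Compatibility, read on the standard basis, says exactly that
`v ᵥ* s g = ξ g • v`: `v` is a left eigenvector of `s g`. Hence `det (ξ g - s g) = 0`, i.e. `ξ g` is a
root of the characteristic polynomial. The latter is the image of the monic integer polynomial
`(s g).charpoly`, which gives integrality. -/

/-- An additive map on `ℤ^k` is determined by its values on the standard basis. -/
lemma addHom_apply_eq_sum {k : ℕ} (ψ : (Fin k → ℤ) →+ ℂ) (a : Fin k → ℤ) :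
    ψ a = ∑ i, (a i : ℂ) * ψ (Pi.single i 1) := by
  conv_lhs => rw [pi_eq_sum_univ' a]
  rw [map_sum]
  refine Finset.sum_congr rfl fun i _ => ?_
  rw [map_zsmul, zsmul_eq_mul]

/-- If `s : G → GL_k(ℤ)`, `ξ : G → ℂ*` and `ψ : ℤ^k → ℂ` is a non-zero
additive homomorphism with `ψ(s(g)·a) = ξ(g)·ψ(a)`, then every `ξ g` is an eigenvalue of
`s g` (a root of its characteristic polynomial over `ℂ`); in particular each `ξ g` is an
algebraic integer. -/
theorem stmt11 {G : Type*} [Group G] {k : ℕ}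
    (s : G →* GL (Fin k) ℤ) (ξ : G →* ℂˣ)
    (ψ : (Fin k → ℤ) →+ ℂ) (hψ : ψ ≠ 0)
    (hcompat : ∀ (g : G) (a : Fin k → ℤ),
      ψ ((s g : Matrix (Fin k) (Fin k) ℤ).mulVec a) = (ξ g : ℂ) * ψ a) :
    ∀ g : G,
      (((s g : Matrix (Fin k) (Fin k) ℤ).map (Int.cast : ℤ → ℂ)).charpoly).IsRoot (ξ g) ∧
        IsIntegral ℤ ((ξ g : ℂ)) := by
  intro g
  set M : Matrix (Fin k) (Fin k) ℤ := (s g : Matrix (Fin k) (Fin k) ℤ) with hM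
  have hroot : ((M.map (Int.cast : ℤ → ℂ)).charpoly).IsRoot (ξ g) := by
    rw [Polynomial.IsRoot.def, Matrix.eval_charpoly, ← Matrix.exists_vecMul_eq_zero_iff]
    refine ⟨fun i => ψ (Pi.single i 1), fun h0 => hψ ?_, ?_⟩
    · refine AddMonoidHom.ext fun a => ?_
      rw [addHom_apply_eq_sum]
      exact Finset.sum_eq_zero fun i _ => by
        rw [show ψ (Pi.single i 1) = 0 from congrFun h0 i, mul_zero]
    · ext j
      have h := hcompat g (Pi.single j 1)
      rw [addHom_apply_eq_sum ψ (Matrix.mulVec _ _)] at h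
      simp only [Matrix.mulVec_single_one, Matrix.col_apply] at h
      rw [Matrix.vecMul_sub, Pi.sub_apply, Pi.zero_apply, sub_eq_zero, Matrix.scalar_apply,
        Matrix.vecMul_diagonal, mul_comm, ← h]
      simp only [Matrix.vecMul, dotProduct, Matrix.map_apply]
      exact Finset.sum_congr rfl fun i _ => mul_comm _ _
  refine ⟨hroot, M.charpoly, M.charpoly_monic, ?_⟩
  have hmap : (M.map (Int.cast : ℤ → ℂ)).charpoly = M.charpoly.map (algebraMap ℤ ℂ) :=
    Matrix.charpoly_map M (algebraMap ℤ ℂ)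
  rw [← Polynomial.eval_map, ← hmap]
  exact hroot
end

section
/- Let G be a group generated by a finite set, k ≥ 1, and s: G → GL_k(ℤ) a group homomorphism. Then the set of characters ξ: G → ℂ* for which there exists a non-zero additive group homomorphism ψ: ℤ^k → ℂ satisfying ψ(s(g)·a) = ξ(g)·ψ(a) for all g ∈ G and a ∈ ℤ^k is finite. -/
/-!
For each `g`, a non-zero `ψ` as in the statement is, in coordinates, a non-zero left eigenvector
of the integer matrix `s g` over `ℂ` with eigenvalue `ξ g`. Hence `ξ g` is a root of the
characteristic polynomial of `s g` (`isRoot_charpoly_of_semiinvariant`), which leaves finitely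
many values. A character is determined by its values on a finite generating set, so only finitely
many characters occur.
-/

/-- The vector `(ψ e₁, …, ψ e_k)` is a non-zero left eigenvector of `M` with eigenvalue `c`. -/
lemma isRoot_charpoly_of_semiinvariant {k : ℕ} (M : Matrix (Fin k) (Fin k) ℤ) (c : ℂ)
    (ψ : (Fin k → ℤ) →+ ℂ) (hψ : ψ ≠ 0) (h : ∀ a, ψ (M.mulVec a) = c * ψ a) :
    (M.map (Int.castRingHom ℂ)).charpoly.IsRoot c := by
  have hcoord : ∀ a : Fin k → ℤ, ψ a = ∑ i, ψ (Pi.single i 1) * (a i : ℂ) := by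
    intro a
    conv_lhs => rw [pi_eq_sum_univ' a, map_sum]
    refine Finset.sum_congr rfl fun i _ => ?_
    rw [map_zsmul, zsmul_eq_mul, mul_comm]
  rw [Polynomial.IsRoot, Matrix.eval_charpoly]
  refine Matrix.exists_vecMul_eq_zero_iff.mp ⟨fun i => ψ (Pi.single i 1), ?_, ?_⟩
  · intro h0
    refine hψ (AddMonoidHom.ext fun a => ?_)
    rw [hcoord]
    exact Finset.sum_eq_zero fun i _ => by rw [congrFun h0 i]; simp
  · ext j
    have hj := h (Pi.single j 1)
    rw [hcoord (M.mulVec _)] at hj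
    simp only [Matrix.mulVec_single_one, Matrix.col_apply] at hj
    rw [Matrix.vecMul_sub, Pi.sub_apply]
    simp only [Matrix.scalar_apply, Matrix.vecMul_diagonal, Pi.zero_apply]
    rw [mul_comm, ← hj]
    simp [Matrix.vecMul, dotProduct]


/-- For a finitely generated group `G`, `k ≥ 1` and a homomorphism
`s : G → GL_k(ℤ)`, only finitely many characters `ξ : G → ℂ*` admit a non-zero additive
homomorphism `ψ : ℤ^k → ℂ` with `ψ(s(g)·a) = ξ(g)·ψ(a)` for all `g`, `a`. -/
theorem stmt12 {G : Type*} [Group G] (hfg : Group.FG G) {k : ℕ} (hk : 1 ≤ k)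
    (s : G →* GL (Fin k) ℤ) :
    {ξ : G →* ℂˣ | ∃ ψ : (Fin k → ℤ) →+ ℂ, ψ ≠ 0 ∧
      ∀ (g : G) (a : Fin k → ℤ),
        ψ ((s g : Matrix (Fin k) (Fin k) ℤ).mulVec a) = (ξ g : ℂ) * ψ a}.Finite := by
  obtain ⟨S, hS⟩ := Group.fg_def.mp hfg
  have hfin : (Set.univ.pi fun g : S =>
      {c : ℂ | (((s g : Matrix (Fin k) (Fin k) ℤ)).map
        (Int.castRingHom ℂ)).charpoly.IsRoot c}).Finite :=
    Set.Finite.pi fun g => Polynomial.finite_setOfPred_isRoot (Matrix.charpoly_monic _).ne_zero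
  refine Set.Finite.of_finite_image (f := fun (ξ : G →* ℂˣ) (g : S) => (ξ g : ℂ))
    (hfin.subset ?_) ?_
  · rintro _ ⟨ξ, ⟨ψ, hψ, h⟩, rfl⟩ g -
    exact isRoot_charpoly_of_semiinvariant _ _ ψ hψ (h g)
  · intro ξ _ η _ hξη
    exact MonoidHom.eq_of_eqOn_dense hS fun g hg => Units.ext (congrFun hξη ⟨g, hg⟩)
end

section
/- Let G be a group whose abelianization is finitely generated, let ξ: G → ℂ* be a character, and suppose there exists k ≥ 1 such that every value ξ(g), g ∈ G, is a root of some monic polynomial with integer coefficients of degree at most k. Let b: G → ℂ be a ξ-cocycle, i.e., b(xy) = b(x) + ξ(x)·b(y) for all x, y ∈ G. Let F ⊆ G be a finite subset and let N be the smallest normal subgroup of G containing F, and assume ξ(n) = 1 for all n ∈ N. Then the additive subgroup of ℂ generated by the image b(N) is finitely generated. -/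
/-!
On `N` the character is trivial, so `b` restricts to a homomorphism `N → (ℂ, +)`, and
`b (g n g⁻¹) = ξ g * b n` for `n ∈ N`. Hence `b(N)` lies in the `ℤ`-module `R · b(F)`, where `R` is
the subring of `ℂ` generated by `ξ(G)`. The character factors through the abelianization, so `R` is
generated as a ring by finitely many values of `ξ` (as monoid generators of the abelianization are
used, no inverses are needed); these are algebraic integers, so `R` is a finite `ℤ`-module. Thus
`R · b(F)` is a finitely generated abelian group, and so is each of its subgroups.
-/

/-- The values of a character with algebraic integer values lie in a subring of `ℂ` that is finite
over `ℤ`, provided the abelianization is finitely generated. -/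
lemma exists_finite_subalgebra {G : Type*} [Group G] (hab : Group.FG (Abelianization G))
    (ξ : G →* ℂˣ) (hint : ∀ g : G, IsIntegral ℤ (ξ g : ℂ)) :
    ∃ R : Subalgebra ℤ ℂ, R.toSubmodule.FG ∧ ∀ g : G, (ξ g : ℂ) ∈ R := by
  obtain ⟨T, hT⟩ := (Monoid.fg_def.1 (Group.fg_iff_monoid_fg.1 hab))
  let φ : Abelianization G →* ℂ := (Units.coeHom ℂ).comp (Abelianization.lift ξ)
  have hφ : ∀ g : G, φ (Abelianization.of g) = (ξ g : ℂ) := fun g => by simp [φ]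
  refine ⟨Algebra.adjoin ℤ (φ '' (T : Set (Abelianization G))),
    fg_adjoin_of_finite (T.finite_toSet.image φ) ?_, fun g => ?_⟩
  · rintro _ ⟨x, -, rfl⟩
    obtain ⟨g, rfl⟩ := QuotientGroup.mk_surjective x
    exact (hφ g).symm ▸ hint g
  · have hle : Submonoid.closure (T : Set (Abelianization G)) ≤
        (Algebra.adjoin ℤ (φ '' (T : Set (Abelianization G)))).toSubmonoid.comap φ :=
      Submonoid.closure_le.2 fun x hx => Algebra.subset_adjoin ⟨x, hx, rfl⟩
    rw [hT] at hle
    rw [← hφ g]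
    exact hle (Submonoid.mem_top (Abelianization.of g))

lemma cocycle_one {G : Type*} [Group G] {ξ : G →* ℂˣ} {b : G → ℂ}
    (hb : ∀ x y : G, b (x * y) = b x + (ξ x : ℂ) * b y) : b 1 = 0 := by
  simpa using hb 1 1

lemma cocycle_conj {G : Type*} [Group G] {ξ : G →* ℂˣ} {b : G → ℂ}
    (hb : ∀ x y : G, b (x * y) = b x + (ξ x : ℂ) * b y) (g : G) {n : G} (hn : ξ n = 1) :
    b (g * n * g⁻¹) = ξ g * b n := by
  have h := hb g g⁻¹
  rw [mul_inv_cancel, cocycle_one hb] at h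
  rw [hb, hb, map_mul, hn, mul_one]
  linear_combination -h

/-- Let `G` have finitely generated abelianization, let `ξ : G → ℂ*` take
values that are roots of monic integer polynomials of degree at most `k`, and let
`b : G → ℂ` be a `ξ`-cocycle. If `N` is the normal closure of a finite subset `F ⊆ G` and
`ξ` is trivial on `N`, then the additive subgroup of `ℂ` generated by `b(N)` is finitely
generated. -/
theorem stmt14 {G : Type*} [Group G] (hab : Group.FG (Abelianization G))
    (ξ : G →* ℂˣ) (k : ℕ) (hk : 1 ≤ k)
    (hint : ∀ g : G, ∃ p : Polynomial ℤ, p.Monic ∧ p.natDegree ≤ k ∧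
      Polynomial.aeval ((ξ g : ℂ)) p = 0)
    (b : G → ℂ) (hb : ∀ x y : G, b (x * y) = b x + (ξ x : ℂ) * b y)
    (F : Finset G) (N : Subgroup G) (hN : N = Subgroup.normalClosure (F : Set G))
    (hξN : ∀ n ∈ N, ξ n = 1) :
    (AddSubgroup.closure (b '' (N : Set G))).FG := by
  subst hN
  obtain ⟨R, hR, hξR⟩ := exists_finite_subalgebra hab ξ fun g =>
    let ⟨p, hp, _, h0⟩ := hint g
    ⟨p, hp, by simpa [Polynomial.aeval_def] using h0⟩
  let M : Submodule ℤ ℂ := R.toSubmodule * Submodule.span ℤ (b '' (F : Set G))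
  have hM : M.FG := hR.mul (Submodule.fg_span (F.finite_toSet.image b))
  have hbM : ∀ n ∈ Subgroup.normalClosure (F : Set G), b n ∈ M := by
    intro n hn
    have hn' : n ∈ Subgroup.closure (Group.conjugatesOfSet (F : Set G)) := hn
    have hξ : ∀ x ∈ Subgroup.closure (Group.conjugatesOfSet (F : Set G)), ξ x = 1 :=
      hξN
    induction hn' using Subgroup.closure_induction with
    | mem x hx =>
      obtain ⟨f, hf, hfx⟩ := Group.mem_conjugatesOfSet_iff.1 hx
      obtain ⟨g, rfl⟩ := isConj_iff.1 hfx
      rw [cocycle_conj hb g (hξN f (Subgroup.subset_normalClosure hf))]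
      exact Submodule.mul_mem_mul (hξR g) (Submodule.subset_span ⟨f, hf, rfl⟩)
    | one => simp [cocycle_one hb]
    | mul x y hx hy ihx ihy =>
      rw [hb, hξ x hx, Units.val_one, one_mul]
      exact M.add_mem (ihx hx) (ihy hy)
    | inv x hx ih =>
      have h := hb x x⁻¹
      rw [mul_inv_cancel, cocycle_one hb, hξ x hx, Units.val_one, one_mul] at h
      rw [← neg_eq_of_add_eq_zero_right h.symm]
      exact M.neg_mem (ih hx)
  have hle : Submodule.span ℤ (b '' (Subgroup.normalClosure (F : Set G) : Set G)) ≤ M :=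
    Submodule.span_le.2 (by rintro _ ⟨n, hn, rfl⟩; exact hbM n hn)
  have hfg := Submodule.FG.of_le hM hle
  rw [Submodule.fg_iff_addSubgroup_fg, Submodule.span_int_eq_addSubgroupClosure] at hfg
  exact hfg
end
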